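/- arXiv:1712.04013 — 3 statements merged into one kernel-verified Lean document; each statement's English description precedes it below -/
import Mathlib

section
/- Let d ≥ 1, S the space of smooth ℤ^d-periodic functions ℝ^d → ℝ, b : ℝ^d → ℝ^d a smooth ℤ^d-periodic vector field, σ > 0, and 𝓛 the differential operator 𝓛φ = b·∇φ + (σ²/2)Δφ on S. Let Δt* > 0 and let (Q_Δt)_{Δt ∈ (0,Δt*]} be linear maps S → S admitting the second-order expansion Q_Δt φ = φ + Δt 𝓛φ + (Δt²/2) 𝓛²φ + Δt³ A_3 φ + Δt⁴ R_Δt φ, where A_3 : S → S is linear with ‖A_3 φ‖_{C⁰} ≤ c_3 ‖φ‖_{C^{m_3}} for some c_3, m_3, and where there exist c > 0 and m ∈ ℕ with ‖R_Δt φ‖_{C⁰} ≤ c ‖φ‖_{C^m} for all Δt ∈ (0,Δt*] and φ ∈ S. Let W ∈ S and define Q_Δt^W φ := e^{ΔtW/2} · Q_Δt(e^{ΔtW/2} φ). Then Q_Δt^W φ = φ + Δt(𝓛+W)φ + (Δt²/2)(𝓛+W)²φ + Δt³ Ã_3 φ + Δt⁴ R_{W,Δt} φ, where Ã_3 φ =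 A_3 φ + W³φ/6 + 𝓛(W²φ)/8 + 𝓛²(Wφ)/4 + W 𝓛²φ/4 + W 𝓛(Wφ)/4 + W² 𝓛φ/8, and the remainder R_{W,Δt} (defined by this equality) satisfies a uniform bound: there exist c' > 0 and m' ∈ ℕ with ‖R_{W,Δt} φ‖_{C⁰} ≤ c' ‖φ‖_{C^{m'}} for all Δt ∈ (0,Δt*] and φ ∈ S. -/
open MeasureTheory Finset

/-- Partial derivative in the i-th coordinate direction. -/
noncomputable def pderiv' {d : ℕ} (i : Fin d) (f : (Fin d → ℝ) → ℝ) (q : Fin d → ℝ) : ℝ :=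
  fderiv ℝ f q (Pi.single i 1)

/-- A function on ℝ^d is ℤ^d-periodic if it is invariant under translation by every
vector of ℤ^d. -/
def ZPeriodic {d : ℕ} (f : (Fin d → ℝ) → ℝ) : Prop :=
  ∀ (q : Fin d → ℝ) (m : Fin d → ℤ), f (fun i => q i + (m i : ℝ)) = f q

/-- The space S of smooth ℤ^d-periodic functions. -/
def SmoothPeriodic {d : ℕ} (f : (Fin d → ℝ) → ℝ) : Prop :=
  ContDiff ℝ (⊤ : ℕ∞) f ∧ ZPeriodic f

/-- Iterated partial derivative `∂^α` along a list of coordinate directions. -/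
noncomputable def iterPDeriv {d : ℕ} : List (Fin d) → ((Fin d → ℝ) → ℝ) → (Fin d → ℝ) → ℝ
  | [], f => f
  | i :: l, f => pderiv' i (iterPDeriv l f)

/-- The C^m norm: `‖f‖_{C^m} = sup_{|α| ≤ m} sup_q |∂^α f(q)|`. -/
noncomputable def CmNorm {d : ℕ} (m : ℕ) (f : (Fin d → ℝ) → ℝ) : ℝ :=
  ⨆ p : {l : List (Fin d) // l.length ≤ m} × (Fin d → ℝ), |iterPDeriv p.1.1 f p.2|

/-- The generator `𝓛φ = b·∇φ + (σ²/2)Δφ`. -/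
noncomputable def Lgen {d : ℕ} (b : Fin d → (Fin d → ℝ) → ℝ) (σ : ℝ)
    (f : (Fin d → ℝ) → ℝ) : (Fin d → ℝ) → ℝ :=
  fun q => (∑ i : Fin d, b i q * pderiv' i f q)
    + σ ^ 2 / 2 * ∑ i : Fin d, pderiv' i (pderiv' i f) q

/-!
Every derivative of the remainder `e^{tV} - ∑_{j<k} (tV)^j / j!` replaces `k` by `k - 1` and brings
out a factor `t`, so by the Leibniz rule this remainder is `O(t^k)` in every `C^n` norm. Hence, for
a fixed linear operator `B` bounded from some `C^m` to `C⁰`, the operator `e^{tW/2} B e^{tW/2}`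
agrees with its Taylor polynomial in `t` up to `O(t^k)`. Using this with `k = 4, 3, 2, 1` for the
identity, `𝓛`, `𝓛²` and `A_3`, while the `O(t⁴)` remainder of `Q_t` is only multiplied by bounded
weights, gives the expansion of `Q_t^W` by collecting powers of `t`.
-/

variable {d : ℕ} {f g : (Fin d → ℝ) → ℝ}

lemma ZPeriodic.pderiv' (hf : ZPeriodic f) (i : Fin d) : ZPeriodic (pderiv' i f) := by
  intro q m
  have hshift : (fun x : Fin d → ℝ => f (x + fun j => (m j : ℝ))) = f := funext fun x => hf x m
  have hfderiv := fderiv_comp_add_right (𝕜 := ℝ) (f := f) (x := q) (fun j => (m j : ℝ))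
  rw [hshift] at hfderiv
  exact congrArg (· (Pi.single i 1)) hfderiv.symm

namespace SmoothPeriodic

lemma differentiableAt (hf : SmoothPeriodic f) (q : Fin d → ℝ) : DifferentiableAt ℝ f q :=
  hf.1.differentiable (by simp) q

lemma add (hf : SmoothPeriodic f) (hg : SmoothPeriodic g) : SmoothPeriodic (f + g) :=
  ⟨hf.1.add hg.1, fun q m => congrArg₂ (· + ·) (hf.2 q m) (hg.2 q m)⟩

lemma mul (hf : SmoothPeriodic f) (hg : SmoothPeriodic g) : SmoothPeriodic (f * g) :=
  ⟨hf.1.mul hg.1, fun q m => congrArg₂ (· * ·) (hf.2 q m) (hg.2 q m)⟩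

lemma comp {φ : ℝ → ℝ} (hφ : ContDiff ℝ (⊤ : ℕ∞) φ) (hf : SmoothPeriodic f) :
    SmoothPeriodic (fun x => φ (f x)) :=
  ⟨hφ.comp hf.1, fun q m => congrArg φ (hf.2 q m)⟩

lemma const_smul (c : ℝ) (hf : SmoothPeriodic f) : SmoothPeriodic (c • f) :=
  hf.comp (contDiff_const.mul contDiff_id)

lemma pow (hf : SmoothPeriodic f) (n : ℕ) : SmoothPeriodic (f ^ n) :=
  hf.comp (contDiff_id.pow n)

lemma pderiv' (hf : SmoothPeriodic f) (i : Fin d) : SmoothPeriodic (pderiv' i f) :=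
  ⟨(hf.1.fderiv_right (m := (⊤ : ℕ∞)) (by simp)).clm_apply contDiff_const, hf.2.pderiv' i⟩

lemma iterPDeriv (hf : SmoothPeriodic f) (l : List (Fin d)) : SmoothPeriodic (iterPDeriv l f) := by
  induction l with
  | nil => exact hf
  | cons i l ih => exact ih.pderiv' i

lemma exists_abs_le (hf : SmoothPeriodic f) : ∃ C, ∀ q, |f q| ≤ C := by
  obtain ⟨C, hC⟩ := (isCompact_Icc (a := (0 : Fin d → ℝ)) (b := 1)).exists_bound_of_continuousOn
    hf.1.continuous.continuousOn
  refine ⟨C, fun q => ?_⟩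
  have hfract : f q = f (fun i => Int.fract (q i)) := by
    rw [← hf.2 (fun i => Int.fract (q i)) (fun i => ⌊q i⌋)]
    simp only [Int.fract_add_floor]
  rw [hfract]
  exact hC _ ⟨fun i => Int.fract_nonneg _, fun i => (Int.fract_lt_one _).le⟩

end SmoothPeriodic

lemma pderiv'_add (hf : SmoothPeriodic f) (hg : SmoothPeriodic g) (i : Fin d) :
    pderiv' i (f + g) = pderiv' i f + pderiv' i g := by
  funext q
  simp [pderiv', fderiv_add (hf.differentiableAt q) (hg.differentiableAt q)]

lemma pderiv'_const_smul (c : ℝ) (hf : SmoothPeriodic f) (i : Fin d) :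
    pderiv' i (c • f) = c • pderiv' i f := by
  funext q
  simp [pderiv', fderiv_const_smul (hf.differentiableAt q)]

lemma pderiv'_mul (hf : SmoothPeriodic f) (hg : SmoothPeriodic g) (i : Fin d) :
    pderiv' i (f * g) = pderiv' i f * g + f * pderiv' i g := by
  funext q
  simp only [pderiv', fderiv_mul (hf.differentiableAt q) (hg.differentiableAt q), Pi.add_apply,
    Pi.mul_apply, add_apply, smul_apply, smul_eq_mul]
  ring

lemma pderiv'_comp {φ : ℝ → ℝ} {φ' : ℝ} {q : Fin d → ℝ} (hφ : HasDerivAt φ φ' (f q))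
    (hf : DifferentiableAt ℝ f q) (i : Fin d) :
    pderiv' i (fun x => φ (f x)) q = φ' * pderiv' i f q := by
  have hcomp : fderiv ℝ (fun x => φ (f x)) q = φ' • fderiv ℝ f q :=
    (hφ.comp_hasFDerivAt q hf.hasFDerivAt).fderiv
  simp [pderiv', hcomp]

lemma iterPDeriv_append_singleton (l : List (Fin d)) (i : Fin d) (f : (Fin d → ℝ) → ℝ) :
    iterPDeriv (l ++ [i]) f = iterPDeriv l (pderiv' i f) := by
  induction l with
  | nil => rfl
  | cons j l ih => exact congrArg (pderiv' j) ih

namespace CmNorm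

variable {m n : ℕ} {C : ℝ}

lemma nonneg (m : ℕ) (f : (Fin d → ℝ) → ℝ) : 0 ≤ CmNorm m f :=
  Real.iSup_nonneg fun _ => abs_nonneg _

lemma abs_iterPDeriv_le (hf : SmoothPeriodic f) {l : List (Fin d)} (hl : l.length ≤ m)
    (q : Fin d → ℝ) : |iterPDeriv l f q| ≤ CmNorm m f := by
  choose C hC using fun l => (hf.iterPDeriv l).exists_abs_le
  obtain ⟨M, hM⟩ := ((List.finite_length_le (Fin d) m).image C).bddAbove
  have hbdd : BddAbove (Set.range fun p : {l : List (Fin d) // l.length ≤ m} × (Fin d → ℝ) =>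
      |iterPDeriv p.1.1 f p.2|) := by
    refine ⟨M, ?_⟩
    rintro _ ⟨⟨⟨k, hk⟩, x⟩, rfl⟩
    exact (hC k x).trans (hM ⟨k, hk, rfl⟩)
  exact le_ciSup hbdd ⟨⟨l, hl⟩, q⟩

lemma abs_apply_le (hf : SmoothPeriodic f) (m : ℕ) (q : Fin d → ℝ) : |f q| ≤ CmNorm m f :=
  abs_iterPDeriv_le (l := []) hf (Nat.zero_le m) q

lemma le_of_forall (h : ∀ l : List (Fin d), l.length ≤ m → ∀ q, |iterPDeriv l f q| ≤ C) :
    CmNorm m f ≤ C := by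
  have : Nonempty ({l : List (Fin d) // l.length ≤ m} × (Fin d → ℝ)) := ⟨⟨⟨[], by simp⟩, 0⟩⟩
  exact ciSup_le fun p => h p.1.1 p.1.2 p.2

lemma mono (hf : SmoothPeriodic f) (hmn : m ≤ n) : CmNorm m f ≤ CmNorm n f :=
  le_of_forall fun _ hl => abs_iterPDeriv_le hf (hl.trans hmn)

lemma pderiv'_le (hf : SmoothPeriodic f) (i : Fin d) (m : ℕ) :
    CmNorm m (pderiv' i f) ≤ CmNorm (m + 1) f := by
  refine le_of_forall fun l hl q => ?_
  rw [← iterPDeriv_append_singleton]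
  exact abs_iterPDeriv_le hf (by simpa using hl) q

lemma zero_le (h : ∀ q, |f q| ≤ C) : CmNorm 0 f ≤ C := by
  refine le_of_forall fun l hl q => ?_
  rw [List.length_eq_zero_iff.1 (Nat.le_zero.1 hl)]
  exact h q

lemma succ_le (hf : SmoothPeriodic f) (h₀ : ∀ q, |f q| ≤ C)
    (h₁ : ∀ i, CmNorm m (pderiv' i f) ≤ C) : CmNorm (m + 1) f ≤ C := by
  refine le_of_forall fun l hl q => ?_
  rcases l.eq_nil_or_concat' with rfl | ⟨l, i, rfl⟩
  · exact h₀ q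
  · rw [iterPDeriv_append_singleton]
    exact (abs_iterPDeriv_le (hf.pderiv' i) (by simpa using hl) q).trans (h₁ i)

lemma add_le (hf : SmoothPeriodic f) (hg : SmoothPeriodic g) (m : ℕ) :
    CmNorm m (f + g) ≤ CmNorm m f + CmNorm m g := by
  induction m generalizing f g with
  | zero =>
    exact zero_le fun q =>
      (abs_add_le _ _).trans (add_le_add (abs_apply_le hf 0 q) (abs_apply_le hg 0 q))
  | succ m ih =>
    refine succ_le (hf.add hg) (fun q => ?_) fun i => ?_
    · exact (abs_add_le _ _).trans (add_le_add (abs_apply_le hf _ q) (abs_apply_le hg _ q))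
    · rw [pderiv'_add hf hg]
      exact (ih (hf.pderiv' i) (hg.pderiv' i)).trans
        (add_le_add (pderiv'_le hf i m) (pderiv'_le hg i m))

lemma mul_le (hf : SmoothPeriodic f) (hg : SmoothPeriodic g) (m : ℕ) :
    CmNorm m (f * g) ≤ 2 ^ m * (CmNorm m f * CmNorm m g) := by
  have habs {f g : (Fin d → ℝ) → ℝ} (hf : SmoothPeriodic f) (hg : SmoothPeriodic g) (m : ℕ)
      (q : Fin d → ℝ) : |(f * g) q| ≤ 2 ^ m * (CmNorm m f * CmNorm m g) := by
    have hprod : |f q| * |g q| ≤ CmNorm m f * CmNorm m g :=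
      mul_le_mul (abs_apply_le hf m q) (abs_apply_le hg m q) (abs_nonneg _) (nonneg m f)
    rw [Pi.mul_apply, abs_mul]
    exact hprod.trans (le_mul_of_one_le_left (mul_nonneg (nonneg m f) (nonneg m g))
      (one_le_pow₀ one_le_two))
  induction m generalizing f g with
  | zero => exact zero_le (habs hf hg 0)
  | succ m ih =>
    refine succ_le (hf.mul hg) (habs hf hg _) fun i => ?_
    calc CmNorm m (pderiv' i (f * g))
        ≤ CmNorm m (pderiv' i f * g) + CmNorm m (f * pderiv' i g) := by
          rw [pderiv'_mul hf hg]
          exact add_le ((hf.pderiv' i).mul hg) (hf.mul (hg.pderiv' i)) m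
      _ ≤ 2 ^ m * (CmNorm m (pderiv' i f) * CmNorm m g)
          + 2 ^ m * (CmNorm m f * CmNorm m (pderiv' i g)) :=
          add_le_add (ih (hf.pderiv' i) hg) (ih hf (hg.pderiv' i))
      _ ≤ 2 ^ m * (CmNorm (m + 1) f * CmNorm (m + 1) g)
          + 2 ^ m * (CmNorm (m + 1) f * CmNorm (m + 1) g) := by
          gcongr 2 ^ m * ?_ + 2 ^ m * ?_
          · exact mul_le_mul (pderiv'_le hf i m) (mono hg m.le_succ) (nonneg _ _) (nonneg _ _)
          · exact mul_le_mul (mono hf m.le_succ) (pderiv'_le hg i m) (nonneg _ _) (nonneg _ _)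
      _ = 2 ^ (m + 1) * (CmNorm (m + 1) f * CmNorm (m + 1) g) := by ring

lemma smul_le (c : ℝ) (hf : SmoothPeriodic f) (m : ℕ) : CmNorm m (c • f) ≤ |c| * CmNorm m f := by
  induction m generalizing f with
  | zero =>
    refine zero_le fun q => ?_
    rw [Pi.smul_apply, smul_eq_mul, abs_mul]
    gcongr
    exact abs_apply_le hf 0 q
  | succ m ih =>
    refine succ_le (hf.const_smul c) (fun q => ?_) fun i => ?_
    · rw [Pi.smul_apply, smul_eq_mul, abs_mul]
      gcongr
      exact abs_apply_le hf _ q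
    · rw [pderiv'_const_smul c hf]
      exact (ih (hf.pderiv' i)).trans (by gcongr; exact pderiv'_le hf i m)

end CmNorm

/-- The remainder `e^s - ∑_{j<k} s^j / j!` of the exponential series, the error made in expanding
the weight `e^{ΔtW/2}`. -/
noncomputable def expTail (k : ℕ) (s : ℝ) : ℝ :=
  Real.exp s - ∑ j ∈ range k, s ^ j / (j.factorial : ℝ)

lemma contDiff_expTail (k : ℕ) : ContDiff ℝ (⊤ : ℕ∞) (expTail k) := by
  unfold expTail
  fun_prop

lemma hasDerivAt_expTail_succ (k : ℕ) (s : ℝ) :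
    HasDerivAt (expTail (k + 1)) (expTail k s) s := by
  refine (Real.hasDerivAt_exp s).sub ?_
  have hterm (j : ℕ) : HasDerivAt (fun s : ℝ => s ^ (j + 1) / ((j + 1).factorial : ℝ))
      (s ^ j / (j.factorial : ℝ)) s := by
    refine ((hasDerivAt_pow (j + 1) s).div_const _).congr_deriv ?_
    rw [Nat.factorial_succ]
    push_cast
    field_simp
  simp only [sum_range_succ', pow_zero]
  exact (HasDerivAt.fun_sum fun j _ => hterm j).add_const _

lemma hasDerivAt_expTail (k : ℕ) (s : ℝ) : HasDerivAt (expTail k) (expTail (k - 1) s) s := by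
  cases k with
  | zero => simpa +unfoldPartialApp [expTail] using Real.hasDerivAt_exp s
  | succ k => exact hasDerivAt_expTail_succ k s

lemma abs_expTail_le (k : ℕ) (s : ℝ) : |expTail k s| ≤ |s| ^ k * Real.exp |s| := by
  have h := Complex.norm_exp_sub_sum_le_norm_mul_exp (s : ℂ) k
  rw [Complex.norm_real, Real.norm_eq_abs] at h
  rw [← Real.norm_eq_abs, ← Complex.norm_real]
  simpa [expTail] using h

lemma SmoothPeriodic.expTail_mul {V : (Fin d → ℝ) → ℝ} (hV : SmoothPeriodic V) (t : ℝ) (k : ℕ) :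
    SmoothPeriodic (fun x => expTail k (t * V x)) :=
  (hV.const_smul t).comp (contDiff_expTail k)

lemma pderiv'_expTail_mul {V : (Fin d → ℝ) → ℝ} (hV : SmoothPeriodic V) (t : ℝ) (k : ℕ)
    (i : Fin d) : pderiv' i (fun x => expTail k (t * V x)) =
      (t • pderiv' i V) * fun x => expTail (k - 1) (t * V x) := by
  funext q
  change pderiv' i (fun x => expTail k ((t • V) x)) q = _
  rw [pderiv'_comp (hasDerivAt_expTail k _) ((hV.const_smul t).differentiableAt q),
    pderiv'_const_smul t hV, mul_comm]
  rfl

lemma exists_abs_expTail_mul_le {V : (Fin d → ℝ) → ℝ} (hV : SmoothPeriodic V) (T : ℝ) (k : ℕ) :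
    ∃ C : ℝ, 0 ≤ C ∧ ∀ t ∈ Set.Ioc 0 T, ∀ q, |expTail k (t * V q)| ≤ C * t ^ k := by
  set A := CmNorm 0 V
  have hA : 0 ≤ A := CmNorm.nonneg 0 V
  refine ⟨A ^ k * Real.exp (T * A), by positivity, fun t ⟨ht, htT⟩ q => ?_⟩
  have htV : |t * V q| ≤ t * A := by
    rw [abs_mul, abs_of_pos ht]
    gcongr
    exact CmNorm.abs_apply_le hV 0 q
  calc |expTail k (t * V q)| ≤ |t * V q| ^ k * Real.exp |t * V q| := abs_expTail_le k _
    _ ≤ (t * A) ^ k * Real.exp (T * A) := by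
      gcongr
      exact htV.trans (by gcongr)
    _ = A ^ k * Real.exp (T * A) * t ^ k := by ring

-- The factor `1 + T` only matters for `k = 0`, where the truncated `k - 1` is `0`.
lemma mul_pow_pred_le {t T : ℝ} (ht : t ∈ Set.Ioc 0 T) (k : ℕ) :
    t * t ^ (k - 1) ≤ (1 + T) * t ^ k := by
  obtain ⟨ht, htT⟩ := ht
  cases k with
  | zero => simpa using by linarith
  | succ k =>
    rw [Nat.add_sub_cancel, ← pow_succ']
    exact le_mul_of_one_le_left (by positivity) (by linarith)

lemma cmNorm_pderiv'_expTail_mul_le {V : (Fin d → ℝ) → ℝ} (hV : SmoothPeriodic V) {t T C : ℝ}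
    {n k : ℕ} (ht : t ∈ Set.Ioc 0 T) (hC : 0 ≤ C)
    (h : CmNorm n (fun x => expTail (k - 1) (t * V x)) ≤ C * t ^ (k - 1)) (i : Fin d) :
    CmNorm n (pderiv' i fun x => expTail k (t * V x)) ≤
      2 ^ n * CmNorm (n + 1) V * C * (1 + T) * t ^ k := by
  have ht₀ : 0 < t := ht.1
  have hN : 0 ≤ CmNorm (n + 1) V := CmNorm.nonneg _ _
  have hgrad : CmNorm n (t • pderiv' i V) ≤ t * CmNorm (n + 1) V := by
    refine (CmNorm.smul_le t (hV.pderiv' i) n).trans ?_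
    rw [abs_of_pos ht₀]
    gcongr
    exact CmNorm.pderiv'_le hV i n
  calc CmNorm n (pderiv' i fun x => expTail k (t * V x))
      ≤ 2 ^ n * (CmNorm n (t • pderiv' i V)
        * CmNorm n fun x => expTail (k - 1) (t * V x)) := by
        rw [pderiv'_expTail_mul hV]
        exact CmNorm.mul_le ((hV.pderiv' i).const_smul t) (hV.expTail_mul t _) n
    _ ≤ 2 ^ n * ((t * CmNorm (n + 1) V) * (C * t ^ (k - 1))) := by
        gcongr
        exact CmNorm.nonneg _ _
    _ = 2 ^ n * CmNorm (n + 1) V * C * (t * t ^ (k - 1)) := by ring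
    _ ≤ 2 ^ n * CmNorm (n + 1) V * C * ((1 + T) * t ^ k) :=
        mul_le_mul_of_nonneg_left (mul_pow_pred_le ht k) (by positivity)
    _ = 2 ^ n * CmNorm (n + 1) V * C * (1 + T) * t ^ k := by ring

lemma exists_cmNorm_expTail_mul_le {V : (Fin d → ℝ) → ℝ} (hV : SmoothPeriodic V) (T : ℝ)
    (n k : ℕ) : ∃ C : ℝ, 0 ≤ C ∧ ∀ t ∈ Set.Ioc 0 T,
      CmNorm n (fun x => expTail k (t * V x)) ≤ C * t ^ k := by
  induction n generalizing k with
  | zero =>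
    obtain ⟨C, hC, h⟩ := exists_abs_expTail_mul_le hV T k
    exact ⟨C, hC, fun t ht => CmNorm.zero_le (h t ht)⟩
  | succ n ih =>
    obtain ⟨C₀, hC₀, h₀⟩ := exists_abs_expTail_mul_le hV T k
    obtain ⟨C₁, hC₁, h₁⟩ := ih (k - 1)
    refine ⟨max C₀ (2 ^ n * CmNorm (n + 1) V * C₁ * (1 + T)), le_max_of_le_left hC₀,
      fun t ht => ?_⟩
    have htk : 0 ≤ t ^ k := pow_nonneg ht.1.le k
    exact CmNorm.succ_le (hV.expTail_mul t k)
      (fun q => (h₀ t ht q).trans (mul_le_mul_of_nonneg_right (le_max_left _ _) htk))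
      fun i => (cmNorm_pderiv'_expTail_mul_le hV ht hC₁ (h₁ t ht) i).trans
        (mul_le_mul_of_nonneg_right (le_max_right _ _) htk)

/-- The linear operators on smooth periodic functions that are bounded from some `C^m` to `C⁰`.
Only the values of `B` on smooth periodic functions matter. -/
structure IsC0Bounded (B : ((Fin d → ℝ) → ℝ) → (Fin d → ℝ) → ℝ) : Prop where
  map_add : ∀ f g, SmoothPeriodic f → SmoothPeriodic g → B (f + g) = B f + B g
  map_smul : ∀ (c : ℝ) (f), SmoothPeriodic f → B (c • f) = c • B f
  bound : ∃ C : ℝ, 0 ≤ C ∧ ∃ m : ℕ, ∀ f, SmoothPeriodic f → ∀ q, |B f q| ≤ C * CmNorm m f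

/-- The continuous linear endomorphisms of the Fréchet space of smooth periodic functions: each
`C^n` norm of the image is controlled by some `C^m` norm of the argument. -/
structure IsCmBounded (B : ((Fin d → ℝ) → ℝ) → (Fin d → ℝ) → ℝ) : Prop where
  smoothPeriodic : ∀ f, SmoothPeriodic f → SmoothPeriodic (B f)
  map_add : ∀ f g, SmoothPeriodic f → SmoothPeriodic g → B (f + g) = B f + B g
  map_smul : ∀ (c : ℝ) (f), SmoothPeriodic f → B (c • f) = c • B f
  bound : ∀ n, ∃ C : ℝ, 0 ≤ C ∧ ∃ m : ℕ, ∀ f, SmoothPeriodic f → CmNorm n (B f) ≤ C * CmNorm m f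

namespace IsCmBounded

variable {A B : ((Fin d → ℝ) → ℝ) → (Fin d → ℝ) → ℝ}

lemma isC0Bounded (hB : IsCmBounded B) : IsC0Bounded B where
  map_add := hB.map_add
  map_smul := hB.map_smul
  bound := by
    obtain ⟨C, hC, m, h⟩ := hB.bound 0
    exact ⟨C, hC, m, fun f hf q =>
      (CmNorm.abs_apply_le (hB.smoothPeriodic f hf) 0 q).trans (h f hf)⟩

protected lemma id : IsCmBounded fun f : (Fin d → ℝ) → ℝ => f where
  smoothPeriodic _ hf := hf
  map_add _ _ _ _ := rfl
  map_smul _ _ _ := rfl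
  bound n := ⟨1, zero_le_one, n, fun f _ => (one_mul (CmNorm n f)).ge⟩

protected lemma mul {a : (Fin d → ℝ) → ℝ} (ha : SmoothPeriodic a) :
    IsCmBounded fun f => a * f where
  smoothPeriodic _ hf := ha.mul hf
  map_add f g _ _ := mul_add a f g
  map_smul c f _ := mul_smul_comm c a f
  bound n := ⟨2 ^ n * CmNorm n a, mul_nonneg (by positivity) (CmNorm.nonneg n a), n,
    fun f hf => (CmNorm.mul_le ha hf n).trans_eq (mul_assoc _ _ _).symm⟩

protected lemma smul (c : ℝ) : IsCmBounded fun f : (Fin d → ℝ) → ℝ => c • f where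
  smoothPeriodic _ hf := hf.const_smul c
  map_add f g _ _ := smul_add c f g
  map_smul a f _ := smul_comm c a f
  bound n := ⟨|c|, abs_nonneg c, n, fun _ hf => CmNorm.smul_le c hf n⟩

protected lemma pderiv' (i : Fin d) : IsCmBounded (pderiv' i) where
  smoothPeriodic _ hf := hf.pderiv' i
  map_add _ _ hf hg := pderiv'_add hf hg i
  map_smul c _ hf := pderiv'_const_smul c hf i
  bound n := ⟨1, zero_le_one, n + 1, fun f hf => by
    simpa using CmNorm.pderiv'_le hf i n⟩

lemma add (hA : IsCmBounded A) (hB : IsCmBounded B) : IsCmBounded fun f => A f + B f where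
  smoothPeriodic f hf := (hA.smoothPeriodic f hf).add (hB.smoothPeriodic f hf)
  map_add f g hf hg := by
    rw [hA.map_add f g hf hg, hB.map_add f g hf hg, add_add_add_comm]
  map_smul c f hf := by rw [hA.map_smul c f hf, hB.map_smul c f hf, smul_add]
  bound n := by
    obtain ⟨C, hC, m, h⟩ := hA.bound n
    obtain ⟨C', hC', m', h'⟩ := hB.bound n
    refine ⟨C + C', add_nonneg hC hC', max m m', fun f hf => ?_⟩
    calc CmNorm n (A f + B f) ≤ CmNorm n (A f) + CmNorm n (B f) :=
          CmNorm.add_le (hA.smoothPeriodic f hf) (hB.smoothPeriodic f hf) n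
      _ ≤ C * CmNorm m f + C' * CmNorm m' f := add_le_add (h f hf) (h' f hf)
      _ ≤ C * CmNorm (max m m') f + C' * CmNorm (max m m') f := by
          gcongr
          · exact CmNorm.mono hf (le_max_left _ _)
          · exact CmNorm.mono hf (le_max_right _ _)
      _ = (C + C') * CmNorm (max m m') f := (add_mul _ _ _).symm

lemma sum {ι : Type*} (s : Finset ι) {F : ι → ((Fin d → ℝ) → ℝ) → (Fin d → ℝ) → ℝ}
    (hF : ∀ i, IsCmBounded (F i)) : IsCmBounded fun f => ∑ i ∈ s, F i f := by
  classical
  induction s using Finset.induction_on with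
  | empty => simpa using IsCmBounded.smul (d := d) 0
  | insert i s hi ih => simpa only [sum_insert hi] using (hF i).add ih

lemma comp (hA : IsCmBounded A) (hB : IsCmBounded B) : IsCmBounded fun f => A (B f) where
  smoothPeriodic f hf := hA.smoothPeriodic _ (hB.smoothPeriodic f hf)
  map_add f g hf hg := by
    rw [hB.map_add f g hf hg, hA.map_add _ _ (hB.smoothPeriodic f hf) (hB.smoothPeriodic g hg)]
  map_smul c f hf := by rw [hB.map_smul c f hf, hA.map_smul c _ (hB.smoothPeriodic f hf)]
  bound n := by
    obtain ⟨C, hC, m, h⟩ := hA.bound n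
    obtain ⟨C', hC', m', h'⟩ := hB.bound m
    refine ⟨C * C', mul_nonneg hC hC', m', fun f hf => ?_⟩
    rw [mul_assoc]
    exact (h _ (hB.smoothPeriodic f hf)).trans (mul_le_mul_of_nonneg_left (h' f hf) hC)

end IsCmBounded

lemma Lgen_eq_sum (b : Fin d → (Fin d → ℝ) → ℝ) (σ : ℝ) (f : (Fin d → ℝ) → ℝ) :
    Lgen b σ f = ∑ i, (b i * pderiv' i f + (σ ^ 2 / 2) • pderiv' i (pderiv' i f)) := by
  funext q
  simp [Lgen, sum_add_distrib, mul_sum]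

lemma isCmBounded_Lgen {b : Fin d → (Fin d → ℝ) → ℝ} (hb : ∀ i, SmoothPeriodic (b i)) (σ : ℝ) :
    IsCmBounded (Lgen b σ) := by
  rw [funext (Lgen_eq_sum b σ)]
  exact .sum _ fun i => ((IsCmBounded.mul (hb i)).comp (.pderiv' i)).add
    ((IsCmBounded.smul _).comp ((IsCmBounded.pderiv' i).comp (.pderiv' i)))

/-- A family of operators on smooth periodic functions that is `O(t^k)`, uniformly for
`t ∈ (0, T]`, as a map from some `C^m` to `C⁰`. -/
def OperatorBigO (T : ℝ) (k : ℕ) (F : ℝ → ((Fin d → ℝ) → ℝ) → (Fin d → ℝ) → ℝ) : Prop :=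
  ∃ C : ℝ, 0 ≤ C ∧ ∃ m : ℕ, ∀ t ∈ Set.Ioc 0 T, ∀ f, SmoothPeriodic f → ∀ q,
    |F t f q| ≤ C * t ^ k * CmNorm m f

/-- A family of smooth periodic functions, used as multiplication operators, all of whose `C^n`
norms are `O(t^k)` uniformly for `t ∈ (0, T]`. -/
structure MultiplierBigO (T : ℝ) (k : ℕ) (h : ℝ → (Fin d → ℝ) → ℝ) : Prop where
  smoothPeriodic : ∀ t, SmoothPeriodic (h t)
  bound : ∀ n, ∃ C : ℝ, 0 ≤ C ∧ ∀ t ∈ Set.Ioc 0 T, CmNorm n (h t) ≤ C * t ^ k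

section BigO

variable {T : ℝ} {j k : ℕ} {W : (Fin d → ℝ) → ℝ} {h : ℝ → (Fin d → ℝ) → ℝ}
  {B : ((Fin d → ℝ) → ℝ) → (Fin d → ℝ) → ℝ}
  {F G : ℝ → ((Fin d → ℝ) → ℝ) → (Fin d → ℝ) → ℝ}

lemma SmoothPeriodic.multiplierBigO (hW : SmoothPeriodic W) (T : ℝ) :
    MultiplierBigO T 0 fun _ => W :=
  ⟨fun _ => hW, fun n => ⟨CmNorm n W, CmNorm.nonneg n W, fun _ _ => by simp⟩⟩

lemma multiplierBigO_expTail (hW : SmoothPeriodic W) (T : ℝ) (k : ℕ) :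
    MultiplierBigO T k fun t x => expTail k (t * W x / 2) := by
  have hV : SmoothPeriodic fun x => W x / 2 := hW.comp (contDiff_id.div_const 2)
  simp only [mul_div_assoc]
  exact ⟨fun t => hV.expTail_mul t k, fun n => exists_cmNorm_expTail_mul_le hV T n k⟩

lemma multiplierBigO_exp (hW : SmoothPeriodic W) (T : ℝ) :
    MultiplierBigO T 0 fun t x => Real.exp (t * W x / 2) := by
  simpa [expTail] using multiplierBigO_expTail hW T 0

lemma IsC0Bounded.operatorBigO (hB : IsC0Bounded B) (T : ℝ) : OperatorBigO T 0 fun _ => B := by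
  obtain ⟨C, hC, m, h⟩ := hB.bound
  exact ⟨C, hC, m, fun t _ f hf q => by simpa using h f hf q⟩

namespace OperatorBigO

lemma exists_pos (hF : OperatorBigO T k F) : ∃ C : ℝ, 0 < C ∧ ∃ m : ℕ,
    ∀ t ∈ Set.Ioc 0 T, ∀ f, SmoothPeriodic f → ∀ q, |F t f q| ≤ C * t ^ k * CmNorm m f := by
  obtain ⟨C, hC, m, h⟩ := hF
  refine ⟨C + 1, by positivity, m, fun t ht f hf q => (h t ht f hf q).trans ?_⟩
  have ht₀ : 0 < t := ht.1
  have hN := CmNorm.nonneg m f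
  gcongr
  exact le_add_of_nonneg_right zero_le_one

lemma congr (hF : OperatorBigO T k F)
    (hFG : ∀ t ∈ Set.Ioc 0 T, ∀ f, SmoothPeriodic f → G t f = F t f) : OperatorBigO T k G := by
  obtain ⟨C, hC, m, h⟩ := hF
  exact ⟨C, hC, m, fun t ht f hf q => by simpa only [hFG t ht f hf] using h t ht f hf q⟩

lemma add (hF : OperatorBigO T k F) (hG : OperatorBigO T k G) :
    OperatorBigO T k fun t f => F t f + G t f := by
  obtain ⟨C, hC, m, h⟩ := hF
  obtain ⟨C', hC', m', h'⟩ := hG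
  refine ⟨C + C', add_nonneg hC hC', max m m', fun t ht f hf q => ?_⟩
  have ht₀ : 0 < t := ht.1
  calc |F t f q + G t f q| ≤ |F t f q| + |G t f q| := abs_add_le _ _
    _ ≤ C * t ^ k * CmNorm m f + C' * t ^ k * CmNorm m' f :=
        add_le_add (h t ht f hf q) (h' t ht f hf q)
    _ ≤ C * t ^ k * CmNorm (max m m') f + C' * t ^ k * CmNorm (max m m') f := by
        gcongr
        · exact CmNorm.mono hf (le_max_left _ _)
        · exact CmNorm.mono hf (le_max_right _ _)
    _ = (C + C') * t ^ k * CmNorm (max m m') f := by ring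

lemma sum {ι : Type*} {s : Finset ι} {F : ι → ℝ → ((Fin d → ℝ) → ℝ) → (Fin d → ℝ) → ℝ}
    (hF : ∀ i ∈ s, OperatorBigO T k (F i)) : OperatorBigO T k fun t f => ∑ i ∈ s, F i t f := by
  classical
  induction s using Finset.induction_on with
  | empty => exact ⟨0, le_rfl, 0, fun t _ f _ q => by simp⟩
  | insert i s hi ih =>
    simp only [sum_insert hi]
    exact (hF i (mem_insert_self i s)).add (ih fun j hj => hF j (mem_insert_of_mem hj))

lemma smul_pow (hF : OperatorBigO T k F) (c : ℝ) (j : ℕ) :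
    OperatorBigO T (j + k) fun t f => (c * t ^ j) • F t f := by
  obtain ⟨C, hC, m, h⟩ := hF
  refine ⟨|c| * C, by positivity, m, fun t ht f hf q => ?_⟩
  have htj : 0 ≤ t ^ j := pow_nonneg ht.1.le j
  calc |c * t ^ j * F t f q| = |c| * t ^ j * |F t f q| := by
        rw [abs_mul, abs_mul, abs_of_nonneg htj]
    _ ≤ |c| * t ^ j * (C * t ^ k * CmNorm m f) := by
        gcongr
        exact h t ht f hf q
    _ = |c| * C * t ^ (j + k) * CmNorm m f := by ring

lemma mul (hh : MultiplierBigO T j h) (hF : OperatorBigO T k F) :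
    OperatorBigO T (j + k) fun t f => h t * F t f := by
  obtain ⟨C, hC, m, hFle⟩ := hF
  obtain ⟨C', hC', hhle⟩ := hh.bound 0
  refine ⟨C' * C, mul_nonneg hC' hC, m, fun t ht f hf q => ?_⟩
  have htj : 0 ≤ t ^ j := pow_nonneg ht.1.le j
  calc |h t q * F t f q| = |h t q| * |F t f q| := abs_mul _ _
    _ ≤ C' * t ^ j * (C * t ^ k * CmNorm m f) :=
        mul_le_mul ((CmNorm.abs_apply_le (hh.smoothPeriodic t) 0 q).trans (hhle t ht))
          (hFle t ht f hf q) (abs_nonneg _) (by positivity)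
    _ = C' * C * t ^ (j + k) * CmNorm m f := by ring

lemma comp_mul (hF : OperatorBigO T k F) (hh : MultiplierBigO T j h) :
    OperatorBigO T (k + j) fun t f => F t (h t * f) := by
  obtain ⟨C, hC, m, hFle⟩ := hF
  obtain ⟨C', hC', hhle⟩ := hh.bound m
  refine ⟨2 ^ m * C * C', by positivity, m, fun t ht f hf q => ?_⟩
  have ht₀ : 0 < t := ht.1
  have hN := CmNorm.nonneg m f
  have hht := hh.smoothPeriodic t
  calc |F t (h t * f) q| ≤ C * t ^ k * CmNorm m (h t * f) := hFle t ht _ (hht.mul hf) q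
    _ ≤ C * t ^ k * (2 ^ m * (CmNorm m (h t) * CmNorm m f)) := by
        gcongr
        exact CmNorm.mul_le hht hf m
    _ ≤ C * t ^ k * (2 ^ m * (C' * t ^ j * CmNorm m f)) := by
        gcongr
        exact hhle t ht
    _ = 2 ^ m * C * C' * t ^ (k + j) * CmNorm m f := by ring

end OperatorBigO

/-- The weighted operator `φ ↦ e^{tW/2} · B(e^{tW/2} φ)`; with `B = Q_t` this is the scheme
`Q_t^W` of the paper. -/
noncomputable def weightedConj (W : (Fin d → ℝ) → ℝ) (t : ℝ)
    (B : ((Fin d → ℝ) → ℝ) → (Fin d → ℝ) → ℝ) (f : (Fin d → ℝ) → ℝ) (q : Fin d → ℝ) : ℝ :=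
  Real.exp (t * W q / 2) * B (fun x => Real.exp (t * W x / 2) * f x) q

/-- The Taylor polynomial of degree `< k` in `t` of `weightedConj W t B`, for fixed `B`. -/
noncomputable def weightedTaylor (W : (Fin d → ℝ) → ℝ) (k : ℕ) (t : ℝ)
    (B : ((Fin d → ℝ) → ℝ) → (Fin d → ℝ) → ℝ) (f : (Fin d → ℝ) → ℝ) (q : Fin d → ℝ) : ℝ :=
  ∑ j ∈ range k, (t / 2) ^ j / j.factorial *
    ((∑ i ∈ range (k - j), (t * W q / 2) ^ i / i.factorial) * B (W ^ j * f) q)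

lemma IsC0Bounded.map_add_sum (hB : IsC0Bounded B) {g : (Fin d → ℝ) → ℝ}
    {u : ℕ → (Fin d → ℝ) → ℝ} (hg : SmoothPeriodic g) (hu : ∀ j, SmoothPeriodic (u j))
    (c : ℕ → ℝ) (k : ℕ) :
    B (g + ∑ j ∈ range k, c j • u j) = B g + ∑ j ∈ range k, c j • B (u j) := by
  induction k generalizing g with
  | zero => simp
  | succ k ih =>
    rw [sum_range_succ_comm, ← add_assoc, ih (hg.add ((hu k).const_smul _)),
      hB.map_add _ _ hg ((hu k).const_smul _), hB.map_smul _ _ (hu k), sum_range_succ_comm,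
      add_assoc]

lemma IsC0Bounded.apply_exp_mul (hB : IsC0Bounded B) (hW : SmoothPeriodic W)
    {f : (Fin d → ℝ) → ℝ} (hf : SmoothPeriodic f) (k : ℕ) (t : ℝ) :
    B (fun x => Real.exp (t * W x / 2) * f x) = B ((fun x => expTail k (t * W x / 2)) * f) +
      ∑ j ∈ range k, ((t / 2) ^ j / (j.factorial : ℝ)) • B (W ^ j * f) := by
  have htail := (multiplierBigO_expTail hW 0 k).smoothPeriodic t
  rw [← hB.map_add_sum (htail.mul hf) fun j => (hW.pow j).mul hf]
  congr 1
  funext x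
  simp only [expTail, Pi.add_apply, Pi.mul_apply, Pi.pow_apply, Finset.sum_apply, Pi.smul_apply,
    smul_eq_mul, sub_mul, sum_mul]
  rw [sub_add_eq_add_sub, add_sub_assoc, left_eq_add, sub_eq_zero]
  exact sum_congr rfl fun j _ => by ring

theorem operatorBigO_weightedConj_sub_weightedTaylor (hB : IsC0Bounded B) (hW : SmoothPeriodic W)
    (T : ℝ) (k : ℕ) :
    OperatorBigO T k fun t f => weightedConj W t B f - weightedTaylor W k t B f := by
  have hterm : ∀ j ∈ range k, OperatorBigO T k fun t f => (1 / (2 ^ j * j.factorial) * t ^ j) •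
      ((fun x => expTail (k - j) (t * W x / 2)) * B (W ^ j * f)) := fun j hj => by
    have h := ((hB.operatorBigO T).comp_mul ((hW.pow j).multiplierBigO T)).mul
      (multiplierBigO_expTail hW T (k - j)) |>.smul_pow (1 / (2 ^ j * j.factorial)) j
    rwa [add_zero, add_zero, Nat.add_sub_cancel' (mem_range.1 hj).le] at h
  have htail := ((hB.operatorBigO T).comp_mul (multiplierBigO_expTail hW T k)).mul
    (multiplierBigO_exp hW T)
  rw [zero_add, zero_add] at htail
  refine ((OperatorBigO.sum hterm).add htail).congr fun t _ f hf => funext fun q => ?_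
  have hexp (j : ℕ) : Real.exp (t * W q / 2) = expTail (k - j) (t * W q / 2) +
      ∑ i ∈ range (k - j), (t * W q / 2) ^ i / i.factorial := (sub_add_cancel _ _).symm
  simp only [weightedConj, weightedTaylor, hB.apply_exp_mul hW hf k t, Pi.sub_apply, Pi.add_apply,
    Pi.mul_apply, Finset.sum_apply, Pi.smul_apply, smul_eq_mul]
  rw [mul_add, mul_sum, add_comm, add_sub_right_comm, ← sum_sub_distrib]
  congr 1
  refine sum_congr rfl fun j _ => ?_
  rw [hexp j, div_pow t 2 j]
  field_simp
  ring

lemma OperatorBigO.weightedConj (hF : OperatorBigO T k F) (hW : SmoothPeriodic W) :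
    OperatorBigO T k fun t f => weightedConj W t (F t) f := by
  have h := (hF.comp_mul (multiplierBigO_exp hW T)).mul (multiplierBigO_exp hW T)
  rwa [add_zero, zero_add] at h

end BigO

theorem second_order_weighted_scheme_general {T : ℝ}
    {L A3 : ((Fin d → ℝ) → ℝ) → ((Fin d → ℝ) → ℝ)} (hL : IsCmBounded L) (hA3 : IsC0Bounded A3)
    (Q : ℝ → ((Fin d → ℝ) → ℝ) → ((Fin d → ℝ) → ℝ))
    (hR : ∃ c : ℝ, 0 < c ∧ ∃ m : ℕ, ∀ Δt ∈ Set.Ioc 0 T, ∀ f, SmoothPeriodic f → ∀ q,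
      |Q Δt f q - f q - Δt * L f q - Δt ^ 2 / 2 * L (L f) q - Δt ^ 3 * A3 f q|
        ≤ c * Δt ^ 4 * CmNorm m f)
    {W : (Fin d → ℝ) → ℝ} (hW : SmoothPeriodic W) :
    ∃ c' : ℝ, 0 < c' ∧ ∃ m' : ℕ, ∀ Δt ∈ Set.Ioc 0 T, ∀ f, SmoothPeriodic f → ∀ q,
      |weightedConj W Δt (Q Δt) f q - f q - Δt * (L f q + W q * f q)
          - Δt ^ 2 / 2 * (L (L f + W * f) q + W q * (L f q + W q * f q))
          - Δt ^ 3 * (A3 f q + W q ^ 3 * f q / 6 + L (W ^ 2 * f) q / 8 + L (L (W * f)) q / 4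
              + W q * L (L f) q / 4 + W q * L (W * f) q / 4 + W q ^ 2 * L f q / 8)|
        ≤ c' * Δt ^ 4 * CmNorm m' f := by
  obtain ⟨c, hc, m, hR⟩ := hR
  have hrem : OperatorBigO T 4 fun t f q =>
      Q t f q - f q - t * L f q - t ^ 2 / 2 * L (L f) q - t ^ 3 * A3 f q :=
    ⟨c, hc.le, m, hR⟩
  have htaylor {B} (hB : IsC0Bounded B) := operatorBigO_weightedConj_sub_weightedTaylor hB hW T
  have hsum := ((((hrem.weightedConj hW).add (htaylor IsCmBounded.id.isC0Bounded 4)).add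
    ((htaylor hL.isC0Bounded 3).smul_pow 1 1)).add
    ((htaylor (hL.comp hL).isC0Bounded 2).smul_pow (1 / 2) 2)).add ((htaylor hA3 1).smul_pow 1 3)
  refine (hsum.congr fun t _ f hf => funext fun q => ?_).exists_pos
  simp only [weightedConj, weightedTaylor, Pi.sub_apply, Pi.add_apply, Pi.mul_apply,
    Pi.smul_apply, Pi.pow_apply, smul_eq_mul, sum_range_succ, range_zero, sum_empty,
    Nat.factorial, Nat.reduceSub, pow_zero, pow_one, one_mul,
    hL.map_add _ _ (hL.smoothPeriodic f hf) (hW.mul hf)]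
  push_cast
  ring

/-- Second order schemes for Feynman–Kac dynamics: if Q_Δt is a second-order discretization
of the dynamics with generator 𝓛, then `Q_Δt^W φ = e^{ΔtW/2} Q_Δt (e^{ΔtW/2} φ)` is a
second-order discretization of the Feynman–Kac dynamics with generator 𝓛 + W, with
explicit third-order operator Ã_3. -/
theorem second_order_weighted_scheme
    (d : ℕ) (hd : 1 ≤ d) (Δts : ℝ) (hΔts : 0 < Δts)
    (b : Fin d → (Fin d → ℝ) → ℝ) (σ : ℝ) (hσ : 0 < σ)
    (hb : ∀ i, ContDiff ℝ (⊤ : ℕ∞) (b i)) (hbper : ∀ i, ZPeriodic (b i))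
    (A3 : ((Fin d → ℝ) → ℝ) → ((Fin d → ℝ) → ℝ))
    (hA3map : ∀ f, SmoothPeriodic f → SmoothPeriodic (A3 f))
    (hA3add : ∀ f g, SmoothPeriodic f → SmoothPeriodic g → A3 (f + g) = A3 f + A3 g)
    (hA3smul : ∀ (c : ℝ) (f), SmoothPeriodic f → A3 (c • f) = c • A3 f)
    (hA3bdd : ∃ c3 : ℝ, 0 ≤ c3 ∧ ∃ m3 : ℕ, ∀ f, SmoothPeriodic f → ∀ q,
      |A3 f q| ≤ c3 * CmNorm m3 f)
    (Q : ℝ → ((Fin d → ℝ) → ℝ) → ((Fin d → ℝ) → ℝ))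
    (hQmap : ∀ Δt ∈ Set.Ioc (0:ℝ) Δts, ∀ f, SmoothPeriodic f → SmoothPeriodic (Q Δt f))
    (hQadd : ∀ Δt ∈ Set.Ioc (0:ℝ) Δts, ∀ f g, SmoothPeriodic f → SmoothPeriodic g →
      Q Δt (f + g) = Q Δt f + Q Δt g)
    (hQsmul : ∀ Δt ∈ Set.Ioc (0:ℝ) Δts, ∀ (c : ℝ) (f), SmoothPeriodic f →
      Q Δt (c • f) = c • Q Δt f)
    (hR : ∃ c : ℝ, 0 < c ∧ ∃ m : ℕ, ∀ Δt ∈ Set.Ioc (0:ℝ) Δts, ∀ f, SmoothPeriodic f → ∀ q,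
      |Q Δt f q - f q - Δt * Lgen b σ f q - Δt ^ 2 / 2 * Lgen b σ (Lgen b σ f) q
          - Δt ^ 3 * A3 f q|
        ≤ c * Δt ^ 4 * CmNorm m f)
    (W : (Fin d → ℝ) → ℝ) (hW : SmoothPeriodic W) :
    ∃ c' : ℝ, 0 < c' ∧ ∃ m' : ℕ, ∀ Δt ∈ Set.Ioc (0:ℝ) Δts, ∀ f, SmoothPeriodic f → ∀ q,
      |Real.exp (Δt * W q / 2) * Q Δt (fun x => Real.exp (Δt * W x / 2) * f x) q - f q
          - Δt * (Lgen b σ f q + W q * f q)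
          - Δt ^ 2 / 2 * (Lgen b σ (fun x => Lgen b σ f x + W x * f x) q
              + W q * (Lgen b σ f q + W q * f q))
          - Δt ^ 3 * (A3 f q + W q ^ 3 * f q / 6
              + Lgen b σ (fun x => W x ^ 2 * f x) q / 8
              + Lgen b σ (Lgen b σ (fun x => W x * f x)) q / 4
              + W q * Lgen b σ (Lgen b σ f) q / 4
              + W q * Lgen b σ (fun x => W x * f x) q / 4
              + W q ^ 2 * Lgen b σ f q / 8)|
        ≤ c' * Δt ^ 4 * CmNorm m' f := by
  exact second_order_weighted_scheme_general (isCmBounded_Lgen (fun i => ⟨hb i, hbper i⟩) σ)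
    ⟨hA3add, hA3smul, hA3bdd⟩ Q hR hW
end

section
/- (Error estimate on the principal eigenvalue.) In the torus setting described in the context, let 𝓛φ = b·∇φ + (σ²/2)Δφ with b a smooth ℤ^d-periodic vector field and σ > 0, and suppose in addition to the hypotheses of the invariant-measure error estimate that the scheme is consistent at order p: Ã_k = (𝓛+W)^k / k! for k = 1, …, p (in particular A_1 = 𝓛), that (𝓛+W)ĥ_W = λ ĥ_W, and that h_W satisfies the weak adjoint eigenvalue equation ∫ ((𝓛+W)φ) h_W dν = λ ∫ φ h_W dν for all φ ∈ S. Define λ_{p+1} = ∫ Ã_{p+1}1 dν_W + ∫ W f dν_W, with f the correction function defined from Ã_{p+1}, h_W, ĥ_W, λ as in the invariant-measure error estimate. Then there exist Δt* > 0 and C > 0 such that for all Δt ∈ (0,Δt*], the approximate eigenvalue λ_Δt := (1/Δt) log (∫ Q_Δt^W 1 dν_{W,Δt}) satisfies |λ_Δt − λ − Δt^p (λ_{p+1} − λ^{p+1}/(p+1)!)| ≤ C Δt^{p+1}. -/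
open MeasureTheory ProbabilityTheory Finset

/-- The d-dimensional torus `ℝ^d/ℤ^d`. -/
abbrev Torus (d : ℕ) := Fin d → AddCircle (1:ℝ)

/-- The canonical projection `ℝ^d → ℝ^d/ℤ^d`. -/
noncomputable def Torus.proj {d : ℕ} (q : Fin d → ℝ) : Torus d := fun i => (q i : AddCircle (1:ℝ))

/-- A function on the torus is smooth when its ℤ^d-periodic lift to ℝ^d is smooth;
this identifies S with the smooth ℤ^d-periodic functions on ℝ^d. -/
def TSmooth {d : ℕ} (φ : Torus d → ℝ) : Prop :=
  ContDiff ℝ (⊤ : ℕ∞) (fun q : Fin d → ℝ => φ (Torus.proj q))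

/-- The C^m norm of a function on the torus, computed through its periodic lift. -/
noncomputable def TCmNorm {d : ℕ} (m : ℕ) (φ : Torus d → ℝ) : ℝ :=
  CmNorm m (fun q : Fin d → ℝ => φ (Torus.proj q))

/-- The unit cube `[0,1)^d`, a fundamental domain of the torus. -/
def unitCube (d : ℕ) : Set (Fin d → ℝ) := Set.univ.pi fun _ => Set.Ico (0:ℝ) 1

/-- The action of a weighted evolution operator given by a kernel. -/
noncomputable def evolOp {X : Type*} [MeasurableSpace X] (κ : Kernel X X) (φ : X → ℝ) : X → ℝ :=
  fun q => ∫ q', φ q' ∂(κ q)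

/-- Bounded measurable real-valued functions. -/
def BddMeas {X : Type*} [MeasurableSpace X] (φ : X → ℝ) : Prop :=
  Measurable φ ∧ ∃ C : ℝ, ∀ x, |φ x| ≤ C

/-- Minorization condition. -/
def Minorizes {X : Type*} [MeasurableSpace X] (Q : (X → ℝ) → (X → ℝ)) (ε : ℝ)
    (η : Measure X) : Prop :=
  ∀ φ : X → ℝ, BddMeas φ → (∀ x, 0 ≤ φ x) → ∀ q,
    ε * ∫ x, φ x ∂η ≤ Q φ q ∧ Q φ q ≤ ε⁻¹ * ∫ x, φ x ∂η

/-- Fixed-point (stationarity) equation characterizing the invariant probability measure. -/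
def FixedPt {X : Type*} [MeasurableSpace X] (κ : Kernel X X) (μ : Measure X) : Prop :=
  ∀ φ : X → ℝ, BddMeas φ →
    ∫ q, evolOp κ φ q ∂μ = (∫ q, evolOp κ (fun _ => (1:ℝ)) q ∂μ) * ∫ q, φ q ∂μ

/-- The operator `𝓛 + W` acting on periodic lifts. -/
noncomputable def LgenW {d : ℕ} (b : Fin d → (Fin d → ℝ) → ℝ) (σ : ℝ)
    (Wl f : (Fin d → ℝ) → ℝ) : (Fin d → ℝ) → ℝ :=
  fun q => Lgen b σ f q + Wl q * f q

/-! The idea is to perturb the eigenfunction `ĥ` of `Ã₁ = A₁ + W` into a quasi-eigenfunction of one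
time step. With `B = Ã_{p+1} ĥ` and `α = ∫ B dν_W / ∫ ĥ dν_W`, the function `α ĥ - B` has mean zero
for `ν_W`, so by stability there is a corrector `u` with `(A₁ + W - λ) u = α ĥ - B`. Consistency
at order `p` then makes `φ = ĥ + Δt^p u` satisfy `Q φ = (∑_{k ≤ p} (λ Δt)^k / k! + α Δt^{p+1}) φ`
up to `O(Δt^{p+2})`, uniformly on the torus. Since `φ` is bounded below, testing the fixed-point
equation of `ν_{W,Δt}` against `φ` shows that `∫ Q 1 dν_{W,Δt}` equals this growth factor to the
same order, and the truncated exponential is responsible for the term `λ^{p+1} / (p+1)!` in its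
logarithm. Finally, integrating the equation defining `v` against the constant `1` and using
`A₁ 1 = 0` identifies `α` with `λ_{p+1}`. -/

open Filter Topology Asymptotics

/-! ### Asymptotics of the growth factor -/

section Growth

theorem isBigO_pow_pow_of_le {m n : ℕ} (h : m ≤ n) :
    (fun t : ℝ => t ^ n) =O[𝓝 0] fun t => t ^ m := by
  rcases h.eq_or_lt with rfl | h
  · exact isBigO_refl _ _
  · exact (isLittleO_pow_pow h).isBigO

theorem isBigO_log_sub_of_isBigO_sub_exp {ι : Type*} {l : Filter ι} {L y g : ι → ℝ}
    (hL : (fun i => L i - Real.exp (y i)) =O[l] g) (hg : Tendsto g l (𝓝 0))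
    (hy : IsBoundedUnder (· ≥ ·) l y) :
    (fun i => Real.log (L i) - y i) =O[l] g := by
  have hexp : (fun i => Real.exp (-y i)) =O[l] fun _ => (1 : ℝ) :=
    Real.isBigO_exp_comp_one.2 (isBoundedUnder_le_neg.2 hy)
  have hratio : (fun i => Real.exp (-y i) * L i - 1) =O[l] g := by
    refine (hexp.mul hL).congr (fun i => ?_) fun i => one_mul _
    rw [mul_sub, ← Real.exp_add, neg_add_cancel, Real.exp_zero]
  have hone : Tendsto (fun i => Real.exp (-y i) * L i) l (𝓝 1) := by
    simpa using (hratio.trans_tendsto hg).add_const 1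
  have hlog := ((Real.hasDerivAt_log one_ne_zero).isBigO_sub.comp_tendsto hone).trans hratio
  refine hlog.congr' ?_ EventuallyEq.rfl
  filter_upwards [hone.eventually_ne one_ne_zero] with i hi
  have hLi : L i ≠ 0 := right_ne_zero_of_mul hi
  simp only [Function.comp_apply]
  rw [Real.log_mul (Real.exp_pos _).ne' hLi, Real.log_exp, Real.log_one]
  ring

/-- The quasi-eigenvalue: the Taylor polynomial of `exp (t * lam)` of degree less than `n`,
completed by `α * t ^ n`. For `n = p + 1` it is, up to `O(t ^ (p + 2))`, the growth factor over one
step of length `t` of a scheme consistent at order `p`. -/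
noncomputable def quasiEigenvalue (lam α : ℝ) (n : ℕ) (t : ℝ) : ℝ :=
  ∑ k ∈ range n, (t * lam) ^ k / k.factorial + α * t ^ n

theorem isBigO_exp_mul_sub_sum_range (lam : ℝ) (n : ℕ) :
    (fun t => Real.exp (t * lam) - ∑ k ∈ range n, (t * lam) ^ k / k.factorial)
      =O[𝓝 0] fun t => t ^ n := by
  have hlam : Tendsto (fun t : ℝ => t * lam) (𝓝 0) (𝓝 0) :=
    (continuous_mul_const lam).tendsto' 0 0 (zero_mul lam)
  refine ((Real.exp_sub_sum_range_isBigO_pow n).comp_tendsto hlam).trans ?_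
  simpa only [Function.comp_def, mul_pow, mul_comm] using
    (isBigO_refl (fun t : ℝ => t ^ n) (𝓝 0)).const_mul_left (lam ^ n)

theorem isBigO_quasiEigenvalue_sub_exp (lam α : ℝ) {n : ℕ} (hn : 1 ≤ n) :
    (fun t => quasiEigenvalue lam α n t
      - Real.exp (t * lam + (α - lam ^ n / n.factorial) * t ^ n)) =O[𝓝 0] fun t => t ^ (n + 1) := by
  set β := α - lam ^ n / n.factorial with hβ
  have hb : (fun t : ℝ => β * t ^ n) =O[𝓝 0] fun t => t ^ n :=
    (isBigO_refl _ _).const_mul_left β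
  have hb₀ : Tendsto (fun t : ℝ => β * t ^ n) (𝓝 0) (𝓝 0) :=
    (by fun_prop : Continuous fun t : ℝ => β * t ^ n).tendsto' 0 0 (by simp; omega)
  have hexp_b : (fun t => Real.exp (β * t ^ n) - 1 - β * t ^ n) =O[𝓝 0] fun t => t ^ (n + 1) := by
    have h := ((Real.exp_sub_sum_range_isBigO_pow 2).comp_tendsto hb₀).trans (hb.pow 2)
    refine (h.congr_left fun t => ?_).trans ?_
    · simp [sum_range_succ, sub_sub]
    · simpa only [← pow_mul] using isBigO_pow_pow_of_le (by omega)
  have hexp_a : (fun t => (Real.exp (t * lam) - 1) * (β * t ^ n)) =O[𝓝 0] fun t => t ^ (n + 1) := by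
    refine ((isBigO_exp_mul_sub_sum_range lam 1).mul hb).congr (fun t => ?_) fun t => by ring
    simp
  have hexp_one : (fun t => Real.exp (t * lam)) =O[𝓝 0] fun _ => (1 : ℝ) :=
    ((by fun_prop : Continuous fun t => Real.exp (t * lam)).tendsto 0).isBigO_one ℝ
  have hexp_ab := (hexp_one.mul hexp_b).congr_right fun t => one_mul (t ^ (n + 1))
  refine (((isBigO_exp_mul_sub_sum_range lam (n + 1)).add hexp_ab).add hexp_a).neg_left.congr_left
    fun t => ?_
  rw [sum_range_succ, mul_pow, Real.exp_add, quasiEigenvalue, show α = β + lam ^ n / n.factorial by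
    rw [hβ]; ring]
  ring

theorem isBigO_quasiEigenvalue_sub_one_sub (lam α : ℝ) {n : ℕ} (hn : 2 ≤ n) :
    (fun t => quasiEigenvalue lam α n t - 1 - t * lam) =O[𝓝 0] fun t => t ^ 2 := by
  have htaylor := (isBigO_exp_mul_sub_sum_range lam n).trans (isBigO_pow_pow_of_le hn)
  have hcorr := (isBigO_pow_pow_of_le hn).const_mul_left α
  refine (((isBigO_exp_mul_sub_sum_range lam 2).sub htaylor).add hcorr).congr_left fun t => ?_
  simp only [quasiEigenvalue, sum_range_succ, range_zero, sum_empty, pow_zero, pow_one,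
    Nat.factorial, Nat.cast_one, mul_one, div_one, zero_add]
  ring

theorem isBigO_log_div_sub_of_isBigO_sub_quasiEigenvalue {L : ℝ → ℝ} {lam α : ℝ} {p : ℕ}
    (hL : (fun t => L t - quasiEigenvalue lam α (p + 1) t) =O[𝓝[>] 0] fun t => t ^ (p + 2)) :
    (fun t => 1 / t * Real.log (L t) - lam
      - t ^ p * (α - lam ^ (p + 1) / (p + 1).factorial)) =O[𝓝[>] 0] fun t => t ^ (p + 1) := by
  set β := α - lam ^ (p + 1) / (p + 1).factorial
  have hle : 𝓝[>] (0 : ℝ) ≤ 𝓝 0 := nhdsWithin_le_nhds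
  have hexp : (fun t => L t - Real.exp (t * lam + β * t ^ (p + 1))) =O[𝓝[>] 0]
      fun t => t ^ (p + 2) :=
    (hL.add ((isBigO_quasiEigenvalue_sub_exp lam α (by omega)).mono hle)).congr_left fun t =>
      sub_add_sub_cancel _ _ _
  have hpow : Tendsto (fun t : ℝ => t ^ (p + 2)) (𝓝[>] 0) (𝓝 0) :=
    ((continuous_pow (p + 2)).tendsto' 0 0 (by simp)).mono_left hle
  have hbdd : IsBoundedUnder (· ≥ ·) (𝓝[>] 0) fun t => t * lam + β * t ^ (p + 1) :=
    (((by fun_prop : Continuous fun t => t * lam + β * t ^ (p + 1)).tendsto 0).mono_left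
      hle).isBoundedUnder_ge
  have hlog := isBigO_log_sub_of_isBigO_sub_exp hexp hpow hbdd
  refine ((isBigO_refl (fun t : ℝ => 1 / t) _).mul hlog).congr' ?_ ?_ <;>
    filter_upwards [self_mem_nhdsWithin] with t (ht : 0 < t)
  · field_simp
    ring
  · field_simp
    ring

theorem exists_Ioc_forall_le_of_isBigO_pow {F : ℝ → ℝ} {n : ℕ} {t₀ : ℝ} (ht₀ : 0 < t₀)
    (hF : F =O[𝓝[>] 0] fun t => t ^ n) :
    ∃ δ ∈ Set.Ioc 0 t₀, ∃ C : ℝ, 0 < C ∧ ∀ t ∈ Set.Ioc 0 δ, |F t| ≤ C * t ^ n := by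
  obtain ⟨C, hC, hbound⟩ := hF.exists_pos
  obtain ⟨δ, hδ, hsub⟩ := mem_nhdsGT_iff_exists_Ioc_subset.1 hbound.bound
  refine ⟨min δ t₀, ⟨lt_min hδ ht₀, min_le_right _ _⟩, C, hC, fun t ht => ?_⟩
  have hFt : ‖F t‖ ≤ C * ‖t ^ n‖ := hsub ⟨ht.1, ht.2.trans (min_le_left _ _)⟩
  rwa [Real.norm_eq_abs, Real.norm_of_nonneg (pow_pos ht.1 n).le] at hFt

end Growth

/-! ### Bounded measurable functions and weighted evolution operators -/

section Evolution

variable {X : Type*} [MeasurableSpace X] {φ ψ : X → ℝ} {μ : Measure X}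

namespace BddMeas

theorem const (c : ℝ) : BddMeas fun _ : X => c :=
  ⟨measurable_const, |c|, fun _ => le_rfl⟩

theorem add (hφ : BddMeas φ) (hψ : BddMeas ψ) : BddMeas fun x => φ x + ψ x := by
  obtain ⟨hφm, C, hC⟩ := hφ
  obtain ⟨hψm, D, hD⟩ := hψ
  exact ⟨hφm.add hψm, C + D, fun x => (abs_add_le _ _).trans (add_le_add (hC x) (hD x))⟩

theorem mul (hφ : BddMeas φ) (hψ : BddMeas ψ) : BddMeas fun x => φ x * ψ x := by
  obtain ⟨hφm, C, hC⟩ := hφ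
  obtain ⟨hψm, D, hD⟩ := hψ
  refine ⟨hφm.mul hψm, C * D, fun x => ?_⟩
  rw [abs_mul]
  exact mul_le_mul (hC x) (hD x) (abs_nonneg _) ((abs_nonneg _).trans (hC x))

theorem integrable [IsFiniteMeasure μ] (hφ : BddMeas φ) : Integrable φ μ :=
  let ⟨hφm, C, hC⟩ := hφ
  Integrable.of_bound hφm.aestronglyMeasurable C (Eventually.of_forall hC)

theorem evolOp (hφ : BddMeas φ) (κ : Kernel X X) [IsFiniteKernel κ] :
    BddMeas (evolOp κ φ) := by
  obtain ⟨hφm, C, hC⟩ := hφ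
  refine ⟨hφm.stronglyMeasurable.integral_kernel.measurable, C * κ.bound.toReal, fun x => ?_⟩
  have hC₀ : 0 ≤ C := (abs_nonneg _).trans (hC x)
  calc ‖∫ y, φ y ∂κ x‖ ≤ C * (κ x).real Set.univ :=
        norm_integral_le_of_norm_le_const (Eventually.of_forall hC)
    _ ≤ C * κ.bound.toReal := by
        gcongr
        exact ENNReal.toReal_mono κ.bound_ne_top (κ.measure_le_bound x _)

-- Estimates along `l ×ˢ ⊤` are estimates along `l` that are uniform in the second variable.
theorem isBigO_snd {ι : Type*} {l : Filter ι} (hφ : BddMeas φ) :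
    (fun z : ι × X => φ z.2) =O[l ×ˢ ⊤] fun _ => (1 : ℝ) :=
  let ⟨_, C, hC⟩ := hφ
  IsBigO.of_bound C (Eventually.of_forall fun z => by simpa using hC z.2)

end BddMeas

theorem evolOp_add_const_mul (κ : Kernel X X) [IsFiniteKernel κ] (hφ : BddMeas φ)
    (hψ : BddMeas ψ) (c : ℝ) (x : X) :
    evolOp κ (fun y => φ y + c * ψ y) x = evolOp κ φ x + c * evolOp κ ψ x := by
  simp only [evolOp]
  rw [integral_add hφ.integrable (hψ.integrable.const_mul c), integral_const_mul]

theorem FixedPt.abs_integral_evolOp_one_sub_le [IsProbabilityMeasure μ] {κ : Kernel X X}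
    [IsFiniteKernel κ] (hμ : FixedPt κ μ) (hφ : BddMeas φ) {c m ε : ℝ} (hc : 0 < c)
    (hlow : ∀ x, c ≤ φ x) (hquasi : ∀ x, |evolOp κ φ x - m * φ x| ≤ ε) :
    |∫ x, evolOp κ (fun _ => (1 : ℝ)) x ∂μ - m| ≤ c⁻¹ * ε := by
  set L := ∫ x, evolOp κ (fun _ => (1 : ℝ)) x ∂μ
  have hmass : c ≤ ∫ x, φ x ∂μ := by
    simpa using integral_mono (μ := μ) (integrable_const c) hφ.integrable hlow
  have hdefect : ∫ x, (evolOp κ φ x - m * φ x) ∂μ = (L - m) * ∫ x, φ x ∂μ := by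
    rw [integral_sub (hφ.evolOp κ).integrable (hφ.integrable.const_mul m), integral_const_mul,
      hμ φ hφ, sub_mul]
  have hle : |∫ x, (evolOp κ φ x - m * φ x) ∂μ| ≤ ε := by
    simpa using norm_integral_le_of_norm_le_const (μ := μ)
      (f := fun x => evolOp κ φ x - m * φ x) (Eventually.of_forall hquasi)
  rw [inv_mul_eq_div, le_div_iff₀ hc]
  calc |L - m| * c ≤ |L - m| * |∫ x, φ x ∂μ| := by
        gcongr
        exact hmass.trans (le_abs_self _)
    _ ≤ ε := by rwa [← abs_mul, ← hdefect]

theorem isBigO_integral_evolOp_one_sub {ι : Type*} {l : Filter ι} {κ : ι → Kernel X X}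
    [∀ i, IsFiniteKernel (κ i)] {μ : ι → Measure X}
    (hμ : ∀ᶠ i in l, IsProbabilityMeasure (μ i) ∧ FixedPt (κ i) (μ i))
    {φ : ι → X → ℝ} (hφ : ∀ i, BddMeas (φ i)) {c : ℝ} (hc : 0 < c)
    (hlow : ∀ᶠ i in l, ∀ x, c ≤ φ i x) {m g : ι → ℝ}
    (hquasi : (fun z : ι × X => evolOp (κ z.1) (φ z.1) z.2 - m z.1 * φ z.1 z.2)
      =O[l ×ˢ ⊤] fun z => g z.1) :
    (fun i => ∫ x, evolOp (κ i) (fun _ => (1 : ℝ)) x ∂μ i - m i) =O[l] g := by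
  obtain ⟨K, hK⟩ := hquasi.bound
  rw [← principal_univ, eventually_prod_principal_iff] at hK
  refine IsBigO.of_bound (c⁻¹ * K) ?_
  filter_upwards [hμ, hlow, hK] with i ⟨_, hfix⟩ hlow hK
  rw [mul_assoc]
  exact hfix.abs_integral_evolOp_one_sub_le (hφ i) hc hlow fun x => hK x trivial

end Evolution

/-! ### The quasi-eigenfunction of the scheme -/

section QuasiEigenfunction

variable {X : Type*}

theorem isBigO_prod_top_of_forall_Ioc {F : ℝ × X → ℝ} {C t₀ : ℝ} {n : ℕ} (ht₀ : 0 < t₀)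
    (hF : ∀ t ∈ Set.Ioc 0 t₀, ∀ x, |F (t, x)| ≤ C * t ^ n) :
    F =O[𝓝[>] 0 ×ˢ ⊤] fun z => z.1 ^ n := by
  refine IsBigO.of_bound C ?_
  rw [← principal_univ, eventually_prod_principal_iff]
  filter_upwards [Ioc_mem_nhdsGT ht₀] with t ht x _
  rw [Real.norm_eq_abs, Real.norm_of_nonneg (pow_pos ht.1 n).le]
  exact hF t ht x

theorem isBigO_prod_top_of_isBigO_nhds {f : ℝ → ℝ} {n : ℕ} (hf : f =O[𝓝 0] fun t => t ^ n) :
    (fun z : ℝ × X => f z.1) =O[𝓝[>] 0 ×ˢ ⊤] fun z => z.1 ^ n :=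
  (hf.mono nhdsWithin_le_nhds).comp_tendsto tendsto_fst

theorem isBigO_sub_sum_exp_of_eigen {F : ℝ × X → ℝ} {φ : X → ℝ} {A : ℕ → X → ℝ} {lam : ℝ}
    {p m : ℕ} (hA : ∀ k ∈ Icc 1 p, ∀ x, A k x = lam ^ k / k.factorial * φ x)
    (hF : (fun z => F z - φ z.2 - ∑ k ∈ Icc 1 (p + 1), z.1 ^ k * A k z.2)
      =O[𝓝[>] 0 ×ˢ ⊤] fun z => z.1 ^ m) :
    (fun z => F z - (∑ k ∈ range (p + 1), (z.1 * lam) ^ k / k.factorial) * φ z.2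
      - z.1 ^ (p + 1) * A (p + 1) z.2) =O[𝓝[>] 0 ×ˢ ⊤] fun z => z.1 ^ m := by
  refine hF.congr_left fun z => ?_
  have hsum : ∑ k ∈ Icc 1 p, z.1 ^ k * A k z.2
      = (∑ k ∈ Icc 1 p, (z.1 * lam) ^ k / k.factorial) * φ z.2 := by
    rw [sum_mul]
    refine sum_congr rfl fun k hk => ?_
    rw [hA k hk, mul_pow]
    ring
  rw [sum_Icc_succ_top (by omega), hsum, range_eq_Ico, sum_eq_sum_Ico_succ_bot (by omega),
    pow_zero, Nat.factorial_zero, Nat.cast_one, div_one, zero_add, Ico_add_one_right_eq_Icc]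
  ring

variable [MeasurableSpace X]

theorem isBigO_sub_first_order {F : ℝ × X → ℝ} {A : ℕ → X → ℝ} {n : ℕ} (hn : 1 ≤ n)
    (hA : ∀ k ∈ Icc 2 n, BddMeas (A k))
    (hF : (fun z => F z - ∑ k ∈ Icc 1 n, z.1 ^ k * A k z.2)
      =O[𝓝[>] 0 ×ˢ ⊤] fun z => z.1 ^ (n + 1)) :
    (fun z => F z - z.1 * A 1 z.2) =O[𝓝[>] 0 ×ˢ ⊤] fun z => z.1 ^ 2 := by
  have hterm : ∀ k ∈ Icc 2 n,
      (fun z : ℝ × X => z.1 ^ k * A k z.2) =O[𝓝[>] 0 ×ˢ ⊤] fun z => z.1 ^ 2 := by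
    intro k hk
    simpa using (isBigO_prod_top_of_isBigO_nhds
      (isBigO_pow_pow_of_le (mem_Icc.1 hk).1)).mul (hA k hk).isBigO_snd
  have hrem := hF.trans
    (isBigO_prod_top_of_isBigO_nhds (isBigO_pow_pow_of_le (by omega : 2 ≤ n + 1)))
  refine (hrem.add (IsBigO.fun_sum hterm)).congr_left fun z => ?_
  rw [← insert_Icc_add_one_left_eq_Icc hn, sum_insert (by simp), one_add_one_eq_two, pow_one]
  ring

theorem isBigO_evolOp_quasiEigenfunction {κ : ℝ → Kernel X X} [∀ t, IsFiniteKernel (κ t)]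
    {φ u B : X → ℝ} (hφ : BddMeas φ) (hu : BddMeas u) {lam α : ℝ} {p : ℕ} (hp : 1 ≤ p)
    (hQφ : (fun z : ℝ × X => evolOp (κ z.1) φ z.2
        - (∑ k ∈ range (p + 1), (z.1 * lam) ^ k / k.factorial) * φ z.2 - z.1 ^ (p + 1) * B z.2)
      =O[𝓝[>] 0 ×ˢ ⊤] fun z => z.1 ^ (p + 2))
    (hQu : (fun z : ℝ × X => evolOp (κ z.1) u z.2 - u z.2
        - z.1 * (lam * u z.2 + α * φ z.2 - B z.2)) =O[𝓝[>] 0 ×ˢ ⊤] fun z => z.1 ^ 2) :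
    (fun z : ℝ × X => evolOp (κ z.1) (fun y => φ y + z.1 ^ p * u y) z.2
        - quasiEigenvalue lam α (p + 1) z.1 * (φ z.2 + z.1 ^ p * u z.2))
      =O[𝓝[>] 0 ×ˢ ⊤] fun z => z.1 ^ (p + 2) := by
  have hpow : (fun z : ℝ × X => z.1 ^ p) =O[𝓝[>] 0 ×ˢ ⊤] fun z => z.1 ^ p := isBigO_refl _ _
  have hquasi : (fun z : ℝ × X => quasiEigenvalue lam α (p + 1) z.1 - 1 - z.1 * lam)
      =O[𝓝[>] 0 ×ˢ ⊤] fun z => z.1 ^ 2 :=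
    isBigO_prod_top_of_isBigO_nhds (isBigO_quasiEigenvalue_sub_one_sub lam α (by omega))
  have hu_defect := (hpow.mul hQu).congr_right fun z => (pow_add z.1 p 2).symm
  have hquasi_defect := (hpow.mul (hquasi.mul hu.isBigO_snd)).congr_right
    (g₂ := fun z : ℝ × X => z.1 ^ (p + 2)) fun z => by rw [mul_one, pow_add]
  refine ((hQφ.add hu_defect).sub hquasi_defect).congr_left fun z => ?_
  rw [evolOp_add_const_mul (κ z.1) hφ hu]
  simp only [quasiEigenvalue]
  ring

theorem eventually_half_le_add_pow_mul {φ u : X → ℝ} {c : ℝ} (hc : 0 < c)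
    (hlow : ∀ x, c ≤ φ x) (hu : BddMeas u) {p : ℕ} (hp : 1 ≤ p) :
    ∀ᶠ t in 𝓝[>] (0 : ℝ), ∀ x, c / 2 ≤ φ x + t ^ p * u x := by
  obtain ⟨-, C, hC⟩ := hu
  have hsmall : ∀ᶠ t in 𝓝[>] (0 : ℝ), t ^ p * C < c / 2 :=
    (((by fun_prop : Continuous fun t : ℝ => t ^ p * C).tendsto' 0 0
      (by simp; omega)).mono_left nhdsWithin_le_nhds).eventually_lt_const (half_pos hc)
  filter_upwards [hsmall, self_mem_nhdsWithin] with t ht (ht₀ : 0 < t) x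
  have hux : t ^ p * -C ≤ t ^ p * u x := by
    gcongr
    exact (abs_le.1 (hC x)).1
  linarith [hlow x]

end QuasiEigenfunction

/-! ### The leading coefficient -/

section Coefficient

variable {X : Type*} [MeasurableSpace X] {ν : Measure X}

theorem integral_div_mul_sub_mul_eq_zero {φ B h : X → ℝ}
    (hφ : Integrable (fun x => φ x * h x) ν) (hB : Integrable (fun x => B x * h x) ν)
    (hne : ∫ x, φ x * h x ∂ν ≠ 0) :
    ∫ x, ((∫ y, B y * h y ∂ν) / (∫ y, φ y * h y ∂ν) * φ x - B x) * h x ∂ν = 0 := by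
  simp only [sub_mul, mul_assoc]
  rw [integral_sub (hφ.const_mul _) hB, integral_const_mul, div_mul_cancel₀ _ hne, sub_self]

theorem integral_add_integral_correction_eq {W h v a B : X → ℝ} {lam α : ℝ}
    (hW : Integrable (fun x => W x * h x) ν) (hWv : Integrable (fun x => W x * v x) ν)
    (hv : Integrable v ν) (hh : Integrable h ν) (hB : Integrable B ν)
    (hne : ∀ x, h x ≠ 0) (hnorm : ∫ x, h x ∂ν = 1) (hlam : ∫ x, W x * h x ∂ν = lam)
    (ha : ∫ x, a x ∂ν = 0)
    (heq : ∀ x, a x + W x * v x - lam * v x = -B x + h x * α) :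
    ∫ x, B x ∂ν + ∫ x, W x * (v x / h x - ∫ y, v y ∂ν) * h x ∂ν = α := by
  have hcorr : ∫ x, W x * (v x / h x - ∫ y, v y ∂ν) * h x ∂ν
      = ∫ x, W x * v x ∂ν - (∫ y, v y ∂ν) * lam := by
    rw [← hlam, ← integral_const_mul, ← integral_sub hWv (hW.const_mul _)]
    congr 1 with x
    field_simp [hne x]
  have hlv := hv.const_mul lam
  have hlWv : Integrable (fun x => lam * v x - W x * v x) ν := hlv.sub hWv
  have hlWvB : Integrable (fun x => lam * v x - W x * v x - B x) ν := hlWv.sub hB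
  have hpair : 0 = lam * ∫ x, v x ∂ν - ∫ x, W x * v x ∂ν - ∫ x, B x ∂ν + α := by
    calc 0 = ∫ x, (lam * v x - W x * v x - B x + h x * α) ∂ν := by
          rw [← ha]
          congr 1 with x
          linarith [heq x]
      _ = lam * ∫ x, v x ∂ν - ∫ x, W x * v x ∂ν - ∫ x, B x ∂ν + α := by
          rw [integral_add hlWvB (hh.mul_const α), integral_sub hlWv hB,
            integral_sub hlv hWv, integral_const_mul, integral_mul_const, hnorm, one_mul]
  linarith

end Coefficient

/-! ### The eigenvalue expansion -/

section Eigenvalue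

variable {X : Type*} [MeasurableSpace X] {S : Submodule ℝ (X → ℝ)} {p : ℕ} {lam : ℝ}
  {A : ℕ → (X → ℝ) → X → ℝ}

theorem exists_corrector (hS : ∀ φ ∈ S, BddMeas φ) {ν : Measure X} [IsFiniteMeasure ν]
    {T : (X → ℝ) → X → ℝ} {φ B h : X → ℝ} (hφ : φ ∈ S) (hB : B ∈ S) (hh : BddMeas h)
    {c : ℝ} (hc : 0 < c) (hlow : ∀ x, c ≤ φ x) (hpos : ∀ x, 0 < h x)
    (hnorm : ∫ x, h x ∂ν = 1)
    (hsolv : ∀ g ∈ S, ∫ x, g x * h x ∂ν = 0 → ∃ u ∈ S, ∀ x, T u x - lam * u x = g x) :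
    ∃ u ∈ S, ∀ x, T u x
      = lam * u x + (∫ y, B y * h y ∂ν) / (∫ y, φ y * h y ∂ν) * φ x - B x := by
  have hφh := ((hS φ hφ).mul hh).integrable (μ := ν)
  have hmass : 0 < ∫ x, φ x * h x ∂ν :=
    calc 0 < ∫ x, c * h x ∂ν := by rwa [integral_const_mul, hnorm, mul_one]
      _ ≤ ∫ x, φ x * h x ∂ν := integral_mono (hh.integrable.const_mul c) hφh fun x =>
          mul_le_mul_of_nonneg_right (hlow x) (hpos x).le
  obtain ⟨u, hu, hTu⟩ := hsolv _ (S.sub_mem (S.smul_mem _ hφ) hB)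
    (integral_div_mul_sub_mul_eq_zero hφh ((hS B hB).mul hh).integrable hmass.ne')
  refine ⟨u, hu, fun x => ?_⟩
  have := hTu x
  simp only [Pi.sub_apply, Pi.smul_apply, smul_eq_mul] at this
  linarith

theorem isBigO_integral_evolOp_one_sub_quasiEigenvalue (hp : 1 ≤ p) {α c : ℝ} {φ u : X → ℝ}
    (hφ : BddMeas φ) (hc : 0 < c) (hlow : ∀ x, c ≤ φ x) (hu : BddMeas u)
    (hAφ : ∀ k ∈ Icc 1 p, ∀ x, A k φ x = lam ^ k / k.factorial * φ x)
    (hAu : ∀ k ∈ Icc 2 (p + 1), BddMeas (A k u))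
    (hAu_one : ∀ x, A 1 u x = lam * u x + α * φ x - A (p + 1) φ x)
    {κ : ℝ → Kernel X X} [∀ t, IsFiniteKernel (κ t)] {μ : ℝ → Measure X}
    (hμ : ∀ᶠ t in 𝓝[>] 0, IsProbabilityMeasure (μ t) ∧ FixedPt (κ t) (μ t))
    (hexp : ∀ ψ ∈ ({φ, u} : Set (X → ℝ)), (fun z : ℝ × X => evolOp (κ z.1) ψ z.2 - ψ z.2
      - ∑ k ∈ Icc 1 (p + 1), z.1 ^ k * A k ψ z.2) =O[𝓝[>] 0 ×ˢ ⊤] fun z => z.1 ^ (p + 2)) :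
    (fun t => ∫ x, evolOp (κ t) (fun _ => (1 : ℝ)) x ∂μ t - quasiEigenvalue lam α (p + 1) t)
      =O[𝓝[>] 0] fun t => t ^ (p + 2) := by
  have hQu := isBigO_sub_first_order (by omega) hAu (hexp u (by simp))
  simp only [hAu_one] at hQu
  refine isBigO_integral_evolOp_one_sub hμ (fun t => hφ.add ((BddMeas.const (t ^ p)).mul hu))
    (half_pos hc) (eventually_half_le_add_pow_mul hc hlow hu hp) ?_
  exact isBigO_evolOp_quasiEigenfunction hφ hu hp
    (isBigO_sub_sum_exp_of_eigen hAφ (hexp φ (by simp))) hQu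

theorem principal_eigenvalue_error_estimate_general
    (hS : ∀ φ ∈ S, BddMeas φ) (hone : (fun _ => (1 : ℝ)) ∈ S) (hp : 1 ≤ p)
    {ν : Measure X} [IsFiniteMeasure ν] {W hhat h v : X → ℝ} (hW : BddMeas W)
    (hhatS : hhat ∈ S) {c : ℝ} (hc : 0 < c) (hlow : ∀ x, c ≤ hhat x)
    (hhS : h ∈ S) (hpos : ∀ x, 0 < h x) (hnorm : ∫ x, h x ∂ν = 1)
    (hWlam : ∫ x, W x * h x ∂ν = lam)
    {A₁ A₁star Astar : (X → ℝ) → X → ℝ}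
    (hA_one : ∀ φ ∈ S, ∀ x, A 1 φ x = A₁ φ x + W x * φ x)
    (hA₁one : ∀ x, A₁ (fun _ => 1) x = 0)
    (hAmap : ∀ k ∈ Icc 2 (p + 1), ∀ φ ∈ S, A k φ ∈ S)
    (hA₁star : ∀ φ ∈ S, ∀ ψ ∈ S, ∫ x, A₁ φ x * ψ x ∂ν = ∫ x, φ x * A₁star ψ x ∂ν)
    (hAstarmap : ∀ φ ∈ S, Astar φ ∈ S)
    (hAstar : ∀ φ ∈ S, ∀ ψ ∈ S, ∫ x, A (p + 1) φ x * ψ x ∂ν = ∫ x, φ x * Astar ψ x ∂ν)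
    {κ : ℝ → Kernel X X} [∀ t, IsFiniteKernel (κ t)] {μ : ℝ → Measure X}
    (hμ : ∀ᶠ t in 𝓝[>] 0, IsProbabilityMeasure (μ t) ∧ FixedPt (κ t) (μ t))
    (hexp : ∀ φ ∈ S, (fun z : ℝ × X => evolOp (κ z.1) φ z.2 - φ z.2
      - ∑ k ∈ Icc 1 (p + 1), z.1 ^ k * A k φ z.2) =O[𝓝[>] 0 ×ˢ ⊤] fun z => z.1 ^ (p + 2))
    (hsolv : ∀ g ∈ S, ∫ x, g x * h x ∂ν = 0 →
      ∃ u ∈ S, ∀ x, A₁ u x + W x * u x - lam * u x = g x)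
    (hconsist : ∀ k ∈ Icc 1 p, ∀ x, A k hhat x = lam ^ k / k.factorial * hhat x)
    (hvS : v ∈ S)
    (hv : ∀ x, A₁star v x + W x * v x - lam * v x = -(Astar h x)
      + h x * ((∫ y, A (p + 1) hhat y * h y ∂ν) / (∫ y, hhat y * h y ∂ν))) :
    (fun t => 1 / t * Real.log (∫ x, evolOp (κ t) (fun _ => (1 : ℝ)) x ∂μ t) - lam
      - t ^ p * (((∫ x, A (p + 1) (fun _ => (1 : ℝ)) x * h x ∂ν)
          + ∫ x, W x * (v x / h x - ∫ y, v y ∂ν) * h x ∂ν)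
        - lam ^ (p + 1) / (p + 1).factorial)) =O[𝓝[>] 0] fun t => t ^ (p + 1) := by
  have hBS : A (p + 1) hhat ∈ S := hAmap _ (by simp; omega) hhat hhatS
  obtain ⟨u, hu, hA₁u⟩ := exists_corrector (T := fun u x => A₁ u x + W x * u x) hS hhatS hBS
    (hS h hhS) hc hlow hpos hnorm hsolv
  have hA₁star_zero : ∫ x, A₁star v x ∂ν = 0 := by
    simpa [hA₁one] using (hA₁star _ hone v hvS).symm
  have hAstar_one : ∫ x, A (p + 1) (fun _ => (1 : ℝ)) x * h x ∂ν = ∫ x, Astar h x ∂ν := by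
    simpa using hAstar _ hone h hhS
  rw [hAstar_one, integral_add_integral_correction_eq (hW.mul (hS h hhS)).integrable
    (hW.mul (hS v hvS)).integrable (hS v hvS).integrable (hS h hhS).integrable
    (hS _ (hAstarmap h hhS)).integrable (fun x => (hpos x).ne') hnorm hWlam hA₁star_zero hv]
  refine isBigO_log_div_sub_of_isBigO_sub_quasiEigenvalue
    (isBigO_integral_evolOp_one_sub_quasiEigenvalue hp (hS hhat hhatS) hc hlow (hS u hu) hconsist
      (fun k hk => hS _ (hAmap k hk u hu)) (fun x => (hA_one u hu x).trans (hA₁u x)) hμ ?_)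
  rintro ψ (rfl | rfl)
  exacts [hexp _ hhatS, hexp _ hu]

end Eigenvalue

/-! ### Smooth functions on the torus -/

section TorusFunctions

variable {d : ℕ}

theorem Torus.isOpenQuotientMap_proj : IsOpenQuotientMap (Torus.proj (d := d)) :=
  IsOpenQuotientMap.piMap (f := fun (_ : Fin d) (x : ℝ) => (x : AddCircle (1 : ℝ)))
    fun _ => QuotientAddGroup.isOpenQuotientMap_mk

namespace TSmooth

variable {φ ψ : Torus d → ℝ}

theorem const (c : ℝ) : TSmooth fun _ : Torus d => c :=
  contDiff_const (c := c)

theorem add (hφ : TSmooth φ) (hψ : TSmooth ψ) : TSmooth (φ + ψ) :=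
  ContDiff.add hφ hψ

theorem const_smul (c : ℝ) (hφ : TSmooth φ) : TSmooth (c • φ) :=
  ContDiff.const_smul c hφ

theorem continuous (hφ : TSmooth φ) : Continuous φ :=
  Torus.isOpenQuotientMap_proj.isQuotientMap.continuous_iff.2 (ContDiff.continuous hφ)

theorem bddMeas (hφ : TSmooth φ) : BddMeas φ :=
  ⟨hφ.continuous.measurable,
    hφ.continuous.bounded_above_of_compact_support (HasCompactSupport.of_compactSpace φ)⟩

theorem exists_pos_forall_le (hφ : TSmooth φ) (hpos : ∀ x, 0 < φ x) :
    ∃ c : ℝ, 0 < c ∧ ∀ x, c ≤ φ x := by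
  obtain ⟨x₀, -, hmin⟩ :=
    isCompact_univ.exists_isMinOn Set.univ_nonempty hφ.continuous.continuousOn
  exact ⟨φ x₀, hpos x₀, fun x => hmin (Set.mem_univ x)⟩

end TSmooth

/-- The space `S` of smooth functions on the torus. -/
def smoothFunctions (d : ℕ) : Submodule ℝ (Torus d → ℝ) where
  carrier := {φ | TSmooth φ}
  add_mem' := TSmooth.add
  zero_mem' := TSmooth.const 0
  smul_mem' c _ := TSmooth.const_smul c

theorem one_mem_smoothFunctions : (fun _ => (1 : ℝ)) ∈ smoothFunctions d :=
  TSmooth.const 1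

variable (b : Fin d → (Fin d → ℝ) → ℝ) (σ : ℝ) (Wl : (Fin d → ℝ) → ℝ)

theorem pderiv'_smul (i : Fin d) (c : ℝ) (f : (Fin d → ℝ) → ℝ) :
    pderiv' i (c • f) = c • pderiv' i f := by
  ext q
  simp [pderiv', fderiv_const_smul_field]

theorem LgenW_smul (c : ℝ) (f : (Fin d → ℝ) → ℝ) :
    LgenW b σ Wl (c • f) = c • LgenW b σ Wl f := by
  ext q
  simp only [LgenW, Lgen, pderiv'_smul, Pi.smul_apply, smul_eq_mul, mul_left_comm _ c,
    ← Finset.mul_sum, mul_add]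

theorem iterate_LgenW_of_eigen {f : (Fin d → ℝ) → ℝ} {lam : ℝ} (hf : LgenW b σ Wl f = lam • f)
    (k : ℕ) : (LgenW b σ Wl)^[k] f = lam ^ k • f := by
  induction k with
  | zero => simp
  | succ k ih => rw [Function.iterate_succ_apply', ih, LgenW_smul, hf, smul_smul, pow_succ]

theorem eq_pow_div_factorial_mul_of_eigen {W φ : Torus d → ℝ} {A : (Torus d → ℝ) → Torus d → ℝ}
    {lam : ℝ} {k : ℕ}
    (hA : ∀ q, A φ (Torus.proj q) = (LgenW b σ (fun y => W (Torus.proj y)))^[k]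
      (fun y => φ (Torus.proj y)) q / k.factorial)
    (hφ : ∀ q, LgenW b σ (fun y => W (Torus.proj y)) (fun y => φ (Torus.proj y)) q
      = lam * φ (Torus.proj q)) (x : Torus d) :
    A φ x = lam ^ k / k.factorial * φ x := by
  obtain ⟨q, rfl⟩ := Torus.isOpenQuotientMap_proj.surjective x
  rw [hA, iterate_LgenW_of_eigen b σ _ (funext hφ), Pi.smul_apply, smul_eq_mul, mul_div_right_comm]

end TorusFunctions

/-- Error estimate on the principal eigenvalue for schemes consistent at order p:
`λ_Δt = (1/Δt) log ∫ Q_Δt^W 1 dν_{W,Δt} = λ + Δt^p (λ_{p+1} − λ^{p+1}/(p+1)!) + O(Δt^{p+1})`. -/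
theorem principal_eigenvalue_error_estimate
    (d p : ℕ) (hd : 1 ≤ d) (hp : 1 ≤ p)
    (W : Torus d → ℝ) (hWsm : TSmooth W)
    (ν : Measure (Torus d)) (hνprob : IsProbabilityMeasure ν)
    (ρ : (Fin d → ℝ) → ℝ) (hρsm : ContDiff ℝ (⊤ : ℕ∞) ρ) (hρper : ZPeriodic ρ)
    (hρpos : ∀ x, 0 < ρ x)
    (hνρ : ∀ φ : Torus d → ℝ, BddMeas φ →
      ∫ x, φ x ∂ν = ∫ x in unitCube d, φ (Torus.proj x) * ρ x)
    (lam : ℝ)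
    (hWhat hWfun : Torus d → ℝ)
    (hhatS : TSmooth hWhat) (hhatpos : ∀ x, 0 < hWhat x) (hhatnorm : ∫ x, hWhat x ∂ν = 1)
    (hfunS : TSmooth hWfun) (hfunpos : ∀ x, 0 < hWfun x) (hfunnorm : ∫ x, hWfun x ∂ν = 1)
    (A1 : (Torus d → ℝ) → Torus d → ℝ) (At : ℕ → (Torus d → ℝ) → Torus d → ℝ)
    (hAt1 : ∀ φ x, At 1 φ x = A1 φ x + W x * φ x)
    (hA1one : ∀ x, A1 (fun _ => (1:ℝ)) x = 0)
    (hA1map : ∀ φ, TSmooth φ → TSmooth (A1 φ))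
    (hA1add : ∀ φ ψ, TSmooth φ → TSmooth ψ → A1 (φ + ψ) = A1 φ + A1 ψ)
    (hA1smul : ∀ (c : ℝ) (φ), TSmooth φ → A1 (c • φ) = c • A1 φ)
    (hA1bdd : ∃ c : ℝ, 0 ≤ c ∧ ∃ m : ℕ, ∀ φ, TSmooth φ → ∀ x, |A1 φ x| ≤ c * TCmNorm m φ)
    (hAtmap : ∀ k ∈ Finset.Icc 2 (p + 1), ∀ φ, TSmooth φ → TSmooth (At k φ))
    (hAtadd : ∀ k ∈ Finset.Icc 2 (p + 1), ∀ φ ψ, TSmooth φ → TSmooth ψ →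
      At k (φ + ψ) = At k φ + At k ψ)
    (hAtsmul : ∀ k ∈ Finset.Icc 2 (p + 1), ∀ (c : ℝ) (φ), TSmooth φ →
      At k (c • φ) = c • At k φ)
    (hAtbdd : ∀ k ∈ Finset.Icc 2 (p + 1), ∃ c : ℝ, 0 ≤ c ∧ ∃ m : ℕ,
      ∀ φ, TSmooth φ → ∀ x, |At k φ x| ≤ c * TCmNorm m φ)
    (A1star : (Torus d → ℝ) → Torus d → ℝ)
    (hA1starmap : ∀ φ, TSmooth φ → TSmooth (A1star φ))
    (hA1staradj : ∀ φ ψ, TSmooth φ → TSmooth ψ →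
      ∫ x, A1 φ x * ψ x ∂ν = ∫ x, φ x * A1star ψ x ∂ν)
    (Atp1star : (Torus d → ℝ) → Torus d → ℝ)
    (hAtp1starmap : ∀ φ, TSmooth φ → TSmooth (Atp1star φ))
    (hAtp1staradj : ∀ φ ψ, TSmooth φ → TSmooth ψ →
      ∫ x, At (p + 1) φ x * ψ x ∂ν = ∫ x, φ x * Atp1star ψ x ∂ν)
    -- (i) the family of weighted evolution operators, its minorization, its invariant
    -- measures and its uniform expansion
    (Δt0 : ℝ) (hΔt0 : 0 < Δt0)
    (κ : ℝ → Kernel (Torus d) (Torus d)) (hκfin : ∀ Δt, IsFiniteKernel (κ Δt))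
    (hmin : ∀ Δt ∈ Set.Ioc (0:ℝ) Δt0, ∃ ε ∈ Set.Ioo (0:ℝ) 1, ∃ η : Measure (Torus d),
      IsProbabilityMeasure η ∧ Minorizes (evolOp (κ Δt)) ε η)
    (hQS : ∀ Δt ∈ Set.Ioc (0:ℝ) Δt0, ∀ φ, TSmooth φ → TSmooth (evolOp (κ Δt) φ))
    (νd : ℝ → Measure (Torus d))
    (hνd : ∀ Δt ∈ Set.Ioc (0:ℝ) Δt0, IsProbabilityMeasure (νd Δt) ∧ FixedPt (κ Δt) (νd Δt))
    (hexp : ∃ c : ℝ, 0 < c ∧ ∃ m : ℕ, ∀ Δt ∈ Set.Ioc (0:ℝ) Δt0, ∀ φ, TSmooth φ → ∀ q,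
      |evolOp (κ Δt) φ q - φ q - ∑ k ∈ Finset.Icc 1 (p + 1), Δt ^ k * At k φ q|
        ≤ c * Δt ^ (p + 2) * TCmNorm m φ)
    -- (ii) stability of `A_1 + W - λ` and of its adjoint
    (hstab : ∀ g : Torus d → ℝ, TSmooth g → ∫ x, g x * hWfun x ∂ν = 0 →
      ∃! u : Torus d → ℝ, TSmooth u ∧ ∫ x, u x * hWfun x ∂ν = 0 ∧
        ∀ x, A1 u x + W x * u x - lam * u x = g x)
    (hstabstar : ∀ g : Torus d → ℝ, TSmooth g → ∫ x, g x * hWhat x ∂ν = 0 →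
      ∃! u : Torus d → ℝ, TSmooth u ∧ ∫ x, u x * hWhat x ∂ν = 0 ∧
        ∀ x, A1star u x + W x * u x - lam * u x = g x)
    -- (iii) spectral consistency
    (hspec : ∀ x, A1 hWhat x + W x * hWhat x = lam * hWhat x)
    (hWlam : ∫ x, W x * hWfun x ∂ν = lam)
    -- (iv) invariance
    (hinv : ∀ k ∈ Finset.Icc 1 p, ∃ a : ℝ, ∀ φ, TSmooth φ →
      ∫ x, At k φ x * hWfun x ∂ν = a * ∫ x, φ x * hWfun x ∂ν)
    -- the correction function: v = h_W f₀ solves `(A_1* + W - λ)(h_W f₀) = g̃`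
    (v : Torus d → ℝ) (hvS : TSmooth v) (hvzero : ∫ x, v x * hWhat x ∂ν = 0)
    (hveq : ∀ x, A1star v x + W x * v x - lam * v x =
      -(Atp1star hWfun x) + hWfun x *
        ((∫ y, At (p + 1) hWhat y * hWfun y ∂ν) / (∫ y, hWhat y * hWfun y ∂ν)))
    -- the underlying continuous generator and consistency of the scheme at order p
    (b : Fin d → (Fin d → ℝ) → ℝ) (σ : ℝ) (hσ : 0 < σ)
    (hbsm : ∀ i, ContDiff ℝ (⊤ : ℕ∞) (b i)) (hbper : ∀ i, ZPeriodic (b i))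
    (hA1L : ∀ φ, TSmooth φ → ∀ x : Fin d → ℝ,
      A1 φ (Torus.proj x) = Lgen b σ (fun y => φ (Torus.proj y)) x)
    (hconsist : ∀ k ∈ Finset.Icc 1 p, ∀ φ, TSmooth φ → ∀ x : Fin d → ℝ,
      At k φ (Torus.proj x) =
        (LgenW b σ (fun y => W (Torus.proj y)))^[k] (fun y => φ (Torus.proj y)) x
          / (Nat.factorial k))
    -- `(𝓛+W)ĥ_W = λ ĥ_W`
    (hspecL : ∀ x : Fin d → ℝ,
      LgenW b σ (fun y => W (Torus.proj y)) (fun y => hWhat (Torus.proj y)) x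
        = lam * hWhat (Torus.proj x))
    -- weak adjoint eigenvalue equation for h_W : `∫ ((𝓛+W)φ) h_W dν = λ ∫ φ h_W dν`
    (hadjweak : ∀ φ, TSmooth φ →
      ∫ x, (A1 φ x + W x * φ x) * hWfun x ∂ν = lam * ∫ x, φ x * hWfun x ∂ν) :
    -- conclusion: error estimate on the approximate principal eigenvalue, where
    -- `λ_{p+1} = ∫ Ã_{p+1}1 dν_W + ∫ W f dν_W` and `f = v/h_W − ∫ (v/h_W) dν_W`
    ∃ Δtstar ∈ Set.Ioc (0:ℝ) Δt0, ∃ C : ℝ, 0 < C ∧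
      ∀ Δt ∈ Set.Ioc (0:ℝ) Δtstar,
        |(1 / Δt) * Real.log (∫ x, evolOp (κ Δt) (fun _ => (1:ℝ)) x ∂(νd Δt)) - lam
            - Δt ^ p * (((∫ x, At (p + 1) (fun _ => (1:ℝ)) x * hWfun x ∂ν)
                  + ∫ x, W x * (v x / hWfun x - ∫ y, v y ∂ν) * hWfun x ∂ν)
                - lam ^ (p + 1) / (Nat.factorial (p + 1)))|
          ≤ C * Δt ^ (p + 1) := by
  obtain ⟨c, hc, hlow⟩ := hhatS.exists_pos_forall_le hhatpos
  obtain ⟨K, -, m, hexp⟩ := hexp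
  refine exists_Ioc_forall_le_of_isBigO_pow hΔt0 <|
    principal_eigenvalue_error_estimate_general (S := smoothFunctions d)
      (fun φ hφ => TSmooth.bddMeas hφ) one_mem_smoothFunctions hp hWsm.bddMeas hhatS hc hlow hfunS
      hfunpos hfunnorm hWlam (fun φ _ => hAt1 φ) hA1one hAtmap
      (fun φ hφ ψ hψ => hA1staradj φ ψ hφ hψ) hAtp1starmap
      (fun φ hφ ψ hψ => hAtp1staradj φ ψ hφ hψ) (eventually_of_mem (Ioc_mem_nhdsGT hΔt0) hνd)
      (fun φ hφ => ?_) (fun g hg hg₀ => ?_)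
      (fun k hk => eq_pow_div_factorial_mul_of_eigen b σ (hconsist k hk hWhat hhatS) hspecL)
      hvS hveq
  · exact isBigO_prod_top_of_forall_Ioc (C := K * TCmNorm m φ) hΔt0 fun t ht q =>
      (hexp t ht φ hφ q).trans_eq (mul_right_comm _ _ _)
  · obtain ⟨u, ⟨hu, -, hu_eq⟩, -⟩ := hstab g hg hg₀
    exact ⟨u, hu, hu_eq⟩
end

section
/- Let X be a measurable space equipped with a probability measure m, let α ∈ (0,1], and let k : X × X → ℝ be a bounded measurable function with √α ≤ k(q,q') ≤ 1/√α for all q, q' ∈ X. For a probability measure μ on X, define F_μ(q') = (∫_X k(q,q') μ(dq)) / (∫_X ∫_X k(q,q'') μ(dq) m(dq'')). Then F_μ is a probability density with respect to m (i.e., F_μ ≥ 0 and ∫ F_μ dm = 1) and satisfies α ≤ F_μ(q') ≤ 1/α for all q' ∈ X; that is, the renormalized one-step Feynman–Kac evolution of any probability measure μ through a transition kernel with density k has a density with respect to m bounded below by α and above by 1/α. -/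
open MeasureTheory

/-!
Averaging against a probability measure keeps values in `[a, b]`. Hence `x ↦ ∫ k(y, x) μ(dy)` takes
values in `[a, b]` when `k` does, and so does its own average, the normalizing constant. The
quotient of two numbers in `[a, b]`, `a > 0`, lies in `[a / b, b / a]`, which is `[α, 1 / α]` for
`a = √α` and `b = 1 / √α`.
-/

theorem div_mem_Icc_of_mem_Icc {K : Type*} [Field K] [LinearOrder K] [IsStrictOrderedRing K]
    {a b x y : K} (ha : 0 < a) (hx : x ∈ Set.Icc a b) (hy : y ∈ Set.Icc a b) :
    x / y ∈ Set.Icc (a / b) (b / a) :=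
  ⟨div_le_div₀ (ha.le.trans hx.1) hx.1 (ha.trans_le hy.1) hy.2,
    div_le_div₀ (ha.le.trans (hx.1.trans hx.2)) hx.2 ha hy.1⟩

section Average

variable {X : Type*} [MeasurableSpace X] {m : Measure X}

theorem integral_mem_Icc_of_ae_mem_Icc [IsProbabilityMeasure m] {f : X → ℝ} {a b : ℝ}
    (hf : AEMeasurable f m) (hfab : ∀ᵐ x ∂m, f x ∈ Set.Icc a b) : ∫ x, f x ∂m ∈ Set.Icc a b :=
  (convex_Icc a b).integral_mem isClosed_Icc hfab (Integrable.of_mem_Icc a b hf hfab)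

theorem integral_div_integral_eq_one {𝕜 : Type*} [RCLike 𝕜] {f : X → 𝕜} (hf : ∫ x, f x ∂m ≠ 0) :
    ∫ x, f x / ∫ x', f x' ∂m ∂m = 1 := by
  rw [integral_div, div_self hf]

end Average

section NormalizedImage

variable {X Y : Type*} [MeasurableSpace X] [MeasurableSpace Y]
  {m : Measure X} {μ : Measure Y} {k : Y × X → ℝ} {a b : ℝ}

/-- The density `F_μ` with respect to `m` of the normalized image `Φ₁(μ)` of `μ` under the evolution
operator with kernel density `k`. The denominator is `μ(P₁ 1)` with the order of integration
exchanged. -/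
noncomputable def normalizedImageDensity (m : Measure X) (μ : Measure Y) (k : Y × X → ℝ) (x : X) :
    ℝ :=
  (∫ y, k (y, x) ∂μ) / ∫ x', ∫ y, k (y, x') ∂μ ∂m

theorem normalizedImageDensity_nonneg (hk : 0 ≤ k) (x : X) : 0 ≤ normalizedImageDensity m μ k x :=
  div_nonneg (integral_nonneg fun _ ↦ hk _)
    (integral_nonneg fun _ ↦ integral_nonneg fun _ ↦ hk _)

variable [IsProbabilityMeasure μ]

theorem integral_kernel_mem_Icc (hk : Measurable k) (hkab : ∀ p, k p ∈ Set.Icc a b) (x : X) :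
    ∫ y, k (y, x) ∂μ ∈ Set.Icc a b :=
  integral_mem_Icc_of_ae_mem_Icc (hk.comp measurable_prodMk_right).aemeasurable
    (ae_of_all μ fun _ ↦ hkab _)

variable [IsProbabilityMeasure m]

theorem integral_integral_kernel_mem_Icc (hk : Measurable k) (hkab : ∀ p, k p ∈ Set.Icc a b) :
    ∫ x, ∫ y, k (y, x) ∂μ ∂m ∈ Set.Icc a b :=
  integral_mem_Icc_of_ae_mem_Icc
    hk.stronglyMeasurable.integral_prod_left'.measurable.aemeasurable
    (ae_of_all m (integral_kernel_mem_Icc hk hkab))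

theorem integral_normalizedImageDensity (ha : 0 < a) (hk : Measurable k)
    (hkab : ∀ p, k p ∈ Set.Icc a b) : ∫ x, normalizedImageDensity m μ k x ∂m = 1 :=
  integral_div_integral_eq_one (ha.trans_le (integral_integral_kernel_mem_Icc hk hkab).1).ne'

theorem normalizedImageDensity_mem_Icc (ha : 0 < a) (hk : Measurable k)
    (hkab : ∀ p, k p ∈ Set.Icc a b) (x : X) :
    normalizedImageDensity m μ k x ∈ Set.Icc (a / b) (b / a) :=
  div_mem_Icc_of_mem_Icc ha (integral_kernel_mem_Icc hk hkab x)
    (integral_integral_kernel_mem_Icc hk hkab)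

end NormalizedImage

theorem regularized_density_bounds_general {X Y : Type*} [MeasurableSpace X] [MeasurableSpace Y]
    (m : Measure X) (μ : Measure Y) [IsProbabilityMeasure m] [IsProbabilityMeasure μ]
    {k : Y × X → ℝ} {a b : ℝ} (ha : 0 < a) (hk : Measurable k) (hkab : ∀ p, k p ∈ Set.Icc a b) :
    (∀ x, 0 ≤ normalizedImageDensity m μ k x) ∧
    ∫ x, normalizedImageDensity m μ k x ∂m = 1 ∧
    ∀ x, normalizedImageDensity m μ k x ∈ Set.Icc (a / b) (b / a) :=
  ⟨normalizedImageDensity_nonneg fun p ↦ ha.le.trans (hkab p).1,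
    integral_normalizedImageDensity ha hk hkab, normalizedImageDensity_mem_Icc ha hk hkab⟩

/-- Quantitative regularization of the one-step renormalized Feynman–Kac evolution:
if the transition kernel has a density k with respect to a reference probability
measure m satisfying `√α ≤ k ≤ 1/√α`, then the renormalized image of any probability
measure μ has a density with respect to m bounded between α and 1/α. -/
theorem regularized_density_bounds
    {X : Type*} [MeasurableSpace X] (m μ : Measure X)
    [IsProbabilityMeasure m] [IsProbabilityMeasure μ]
    (α : ℝ) (hα : α ∈ Set.Ioc (0:ℝ) 1)
    (k : X × X → ℝ) (hk : Measurable k)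
    (hkbd : ∀ q q' : X, Real.sqrt α ≤ k (q, q') ∧ k (q, q') ≤ 1 / Real.sqrt α) :
    (∀ q' : X, 0 ≤ (∫ q, k (q, q') ∂μ) / (∫ q'', ∫ q, k (q, q'') ∂μ ∂m)) ∧
    (∫ q', (∫ q, k (q, q') ∂μ) / (∫ q'', ∫ q, k (q, q'') ∂μ ∂m) ∂m) = 1 ∧
    (∀ q' : X,
      α ≤ (∫ q, k (q, q') ∂μ) / (∫ q'', ∫ q, k (q, q'') ∂μ ∂m) ∧
      (∫ q, k (q, q') ∂μ) / (∫ q'', ∫ q, k (q, q'') ∂μ ∂m) ≤ 1 / α) := by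
  have h_lower : √α / (1 / √α) = α := by
    rw [div_div_eq_mul_div, div_one, Real.mul_self_sqrt hα.1.le]
  have h_upper : 1 / √α / √α = 1 / α := by rw [div_div, Real.mul_self_sqrt hα.1.le]
  have h_bounds := regularized_density_bounds_general m μ (Real.sqrt_pos.2 hα.1) hk
    fun p ↦ hkbd p.1 p.2
  rwa [h_lower, h_upper] at h_bounds
end
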